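/- arXiv:1108.6215 — 7 statements merged into one kernel-verified Lean document; each statement's English description precedes it below -/
import Mathlib

section
/- For L = ℚ(ζ_{12}) and K = ℚ(√3) one has M(K) = 1/2 and M(L) = 1/4, so that M(L) = M(K)^2. -/
open NumberField

noncomputable def eucMin (K : Type*) [Field K] [NumberField K] : ℝ :=
  ⨆ ξ : K, ⨅ η : 𝓞 K, |((Algebra.norm ℚ (ξ - (η : K)) : ℚ) : ℝ)|

/-!
If `ϖ` is a nonunit, then `ξ = ϖ⁻¹` shows `M(F) ≥ 1 / |N ϖ|`, with equality as soon as every element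
of `F` is congruent modulo `ϖ` to one whose norm is at most `1` in absolute value. Take
`ϖ = 1 + √3` in `ℚ(√3)` and `ϖ = 1 + i`, `i = ζ ^ 3`, in `L = ℚ(ζ)`.

In `L` write `ξ * conj ξ = p + q√3`, so that `N ξ = p ^ 2 - 3 * q ^ 2 ≤ (3 / 2) * E ξ ^ 2`, where
`E ξ = p + q` is a sum of four squares in suitable coordinates. These identify `E` on the integers
of `L` with the Hurwitz lattice: every `ξ` has an integer `α` with `E (ξ - α) ≤ 1 / 2`. The residue
field of `ϖ` consists of `0` and powers of `ζ`, and `ζ` is an isometry of `E`, so it remains to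
subtract from `r` with `E r ≤ 1 / 2` an integer `e ≡ 1` such that `N (r - e) ≤ 1`. Eight such `e`
are permuted transitively by a shift preserving `N` and `E`, and one of them will do. If
`E r ≥ 1 / 5`, it is the one on whose axis `r` has the largest coordinate: then `E (r - e) ≤ 4 / 5`.
If `E r ≤ 1 / 5`, it is the one for which, after shifting `e` to `1`, `r + conj r` has the largest
rational part `t`: that of `(r - 1) * conj (r - 1)` is `p + 1 - t ≤ 1`, and `N ≤ p ^ 2`.
-/

section General

theorem inv_abs_norm_le_abs_norm_inv_sub {F : Type*} [Field F] [NumberField F] {ϖ : 𝓞 F}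
    (hϖ : ¬IsUnit ϖ) (η : 𝓞 F) :
    |Algebra.norm ℚ (ϖ : F)|⁻¹ ≤ |Algebra.norm ℚ ((ϖ : F)⁻¹ - (η : F))| := by
  rcases eq_or_ne ϖ 0 with rfl | hϖ₀
  · simp
  have hϖ₀' : (ϖ : F) ≠ 0 := RingOfIntegers.coe_ne_zero_iff.mpr hϖ₀
  have hne : 1 - η * ϖ ≠ 0 := fun h ↦
    hϖ (IsUnit.of_mul_eq_one_right η (sub_eq_zero.mp h).symm)
  have hone : 1 ≤ |Algebra.norm ℚ ((1 - η * ϖ : 𝓞 F) : F)| := by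
    rw [← Algebra.coe_norm_int]
    exact_mod_cast Int.one_le_abs (Algebra.norm_ne_zero_iff.mpr hne)
  have hfactor : ((1 - η * ϖ : 𝓞 F) : F) = ((ϖ : F)⁻¹ - (η : F)) * (ϖ : F) := by
    simp only [map_sub, map_one, map_mul, sub_mul, inv_mul_cancel₀ hϖ₀']
  rw [hfactor, map_mul, abs_mul] at hone
  exact (inv_le_iff_one_le_mul₀ (abs_pos.mpr (Algebra.norm_ne_zero_iff.mpr hϖ₀'))).mpr hone

theorem eucMin_eq_inv_abs_norm {F : Type*} [Field F] [NumberField F] {ϖ : 𝓞 F}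
    (hϖ : ¬IsUnit ϖ)
    (h : ∀ ξ : F, ∃ η : 𝓞 F,
      |Algebra.norm ℚ (ξ - (η : F))| ≤ |Algebra.norm ℚ (ϖ : F)|⁻¹) :
    eucMin F = ((|Algebra.norm ℚ (ϖ : F)|⁻¹ : ℚ) : ℝ) := by
  have hbdd (ξ : F) :
      BddBelow (Set.range fun η : 𝓞 F ↦ |((Algebra.norm ℚ (ξ - (η : F)) : ℚ) : ℝ)|) :=
    ⟨0, by rintro _ ⟨η, rfl⟩; exact abs_nonneg _⟩
  have hle (ξ : F) : ⨅ η : 𝓞 F, |((Algebra.norm ℚ (ξ - (η : F)) : ℚ) : ℝ)| ≤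
      ((|Algebra.norm ℚ (ϖ : F)|⁻¹ : ℚ) : ℝ) := by
    obtain ⟨η, hη⟩ := h ξ
    exact ciInf_le_of_le (hbdd ξ) η (by exact_mod_cast hη)
  refine le_antisymm (ciSup_le hle) (le_ciSup_of_le ⟨_, Set.forall_mem_range.mpr hle⟩ (ϖ : F)⁻¹ ?_)
  exact le_ciInf fun η ↦ by exact_mod_cast inv_abs_norm_le_abs_norm_inv_sub hϖ η

theorem not_isUnit_of_one_lt_abs_norm {F : Type*} [Field F] [NumberField F] {ϖ : 𝓞 F}
    (h : 1 < |Algebra.norm ℚ (ϖ : F)|) : ¬IsUnit ϖ := fun hu ↦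
  h.ne' (by simpa using isUnit_iff_norm.mp hu)

theorem algebraNorm_eq_det {R S ι : Type*} [CommRing R] [Ring S] [Algebra R S] [Fintype ι]
    [DecidableEq ι] (b : Module.Basis ι R S) {x : S} {M : Matrix ι ι R}
    (h : ∀ j, x * b j = ∑ i, M i j • b i) : Algebra.norm R x = M.det := by
  have hM : Algebra.leftMulMatrix b x = M := by
    ext i j
    rw [Algebra.leftMulMatrix_eq_repr_mul, h, b.repr_sum_self]
  rw [Algebra.norm_eq_matrix_det b, hM]

theorem abs_norm_eq_one_of_pow_eq_one {R S : Type*} [CommRing R] [LinearOrder R]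
    [IsStrictOrderedRing R] [Ring S] [Algebra R S] {ζ : S} {n : ℕ} (hn : n ≠ 0)
    (hζ : ζ ^ n = 1) : |Algebra.norm R ζ| = 1 := by
  rw [← pow_eq_one_iff_of_nonneg (abs_nonneg _) hn, ← abs_pow, ← map_pow, hζ, map_one, abs_one]

theorem exists_pow_apply_nonneg_and_sum_sq_le {𝕜 V : Type*} [Field 𝕜] [LinearOrder 𝕜]
    [IsStrictOrderedRing 𝕜] [AddCommGroup V] [Module 𝕜 V] {φ : Module.End 𝕜 V} {n : ℕ}
    (hn : n ≠ 0) (hφ : φ ^ n = -1) (f : V →ₗ[𝕜] 𝕜) (v : V) :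
    ∃ k, 0 ≤ f ((φ ^ k) v) ∧
      ∑ j ∈ Finset.range n, f ((φ ^ j) v) ^ 2 ≤ n * f ((φ ^ k) v) ^ 2 := by
  obtain ⟨k, -, hk⟩ := (Finset.range n).exists_max_image (fun j ↦ f ((φ ^ j) v) ^ 2)
    (Finset.nonempty_range_iff.mpr hn)
  have hsum : ∑ j ∈ Finset.range n, f ((φ ^ j) v) ^ 2 ≤ n * f ((φ ^ k) v) ^ 2 := by
    simpa using Finset.sum_le_card_nsmul _ _ _ hk
  rcases le_total 0 (f ((φ ^ k) v)) with hpos | hneg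
  · exact ⟨k, hpos, hsum⟩
  · have hflip : f ((φ ^ (n + k)) v) = -f ((φ ^ k) v) := by simp [pow_add, hφ]
    exact ⟨n + k, by rw [hflip]; exact neg_nonneg.mpr hneg, by rwa [hflip, neg_sq]⟩

theorem exists_int_sum_sq_sub_le_or {𝕜 ι : Type*} [Field 𝕜] [LinearOrder 𝕜]
    [IsStrictOrderedRing 𝕜] [FloorRing 𝕜] [Fintype ι] (v : ι → 𝕜) :
    ∃ w : ι → ℤ, ∑ i, (v i - w i) ^ 2 ≤ (Fintype.card ι : 𝕜) / 8 ∨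
      ∑ i, (v i - w i - 1 / 2) ^ 2 ≤ (Fintype.card ι : 𝕜) / 8 := by
  have hcoord (a : 𝕜) : ∃ m n : ℤ, (a - m) ^ 2 + (a - n - 1 / 2) ^ 2 ≤ 1 / 4 := by
    obtain ⟨hlo, hhi⟩ := abs_le.mp (abs_sub_round a)
    rcases le_total 0 (a - round a) with h | h
    · exact ⟨round a, round a, by nlinarith⟩
    · exact ⟨round a, round a - 1, by push_cast; nlinarith⟩
  choose m n hmn using hcoord
  have hsum : ∑ i, (v i - m (v i)) ^ 2 + ∑ i, (v i - n (v i) - 1 / 2) ^ 2 ≤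
      (Fintype.card ι : 𝕜) / 4 := by
    rw [← Finset.sum_add_distrib]
    exact (Finset.sum_le_card_nsmul _ _ _ fun i _ ↦ hmn (v i)).trans_eq
      (by rw [nsmul_eq_mul, Finset.card_univ]; ring)
  by_cases h : ∑ i, (v i - m (v i)) ^ 2 ≤ (Fintype.card ι : 𝕜) / 8
  · exact ⟨fun i ↦ m (v i), Or.inl h⟩
  · exact ⟨fun i ↦ n (v i), Or.inr (by linarith)⟩

end General

section QuadraticExtension

variable {F E : Type*} [Field F] [Field E] [Algebra F E]

theorem exists_basis_one_sqrt {θ : E} {d : F} (hθ : θ ^ 2 = algebraMap F E d)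
    (hd : ¬IsSquare d) (hE : Module.finrank F E = 2) :
    ∃ b : Module.Basis (Fin 2) F E, ⇑b = ![1, θ] := by
  have hli : LinearIndependent F ![1, θ] := by
    refine (LinearIndependent.pair_iff' one_ne_zero).mpr fun a ha ↦ hd ⟨a, ?_⟩
    apply (algebraMap F E).injective
    rw [← hθ, ← ha, Algebra.smul_def, mul_one, map_mul, sq]
  exact ⟨basisOfLinearIndependentOfCardEqFinrank hli (by simp [hE]), by simp⟩

theorem exists_eq_add_mul_sqrt {θ : E} {d : F} (hθ : θ ^ 2 = algebraMap F E d)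
    (hd : ¬IsSquare d) (hE : Module.finrank F E = 2) (ξ : E) :
    ∃ x y : F, ξ = algebraMap F E x + algebraMap F E y * θ := by
  obtain ⟨b, hb⟩ := exists_basis_one_sqrt hθ hd hE
  refine ⟨b.repr ξ 0, b.repr ξ 1, ?_⟩
  conv_lhs => rw [← b.sum_repr ξ]
  simp [hb, Algebra.smul_def]

theorem norm_add_mul_sqrt {θ : E} {d : F} (hθ : θ ^ 2 = algebraMap F E d)
    (hd : ¬IsSquare d) (hE : Module.finrank F E = 2) (x y : F) :
    Algebra.norm F (algebraMap F E x + algebraMap F E y * θ) = x ^ 2 - d * y ^ 2 := by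
  obtain ⟨b, hb⟩ := exists_basis_one_sqrt hθ hd hE
  have hM : ∀ j, (algebraMap F E x + algebraMap F E y * θ) * b j =
      ∑ i, !![x, d * y; y, x] i j • b i := by
    rw [Fin.forall_fin_two]
    constructor
    · simp [hb, Algebra.smul_def]
    · simp only [hb, Algebra.smul_def, Fin.sum_univ_two, Matrix.of_apply, Matrix.cons_val,
        Matrix.cons_val', map_mul, mul_one]
      linear_combination algebraMap F E y * hθ
  rw [algebraNorm_eq_det b hM, Matrix.det_fin_two_of]
  ring

end QuadraticExtension

theorem exists_int_abs_sq_sub_three_mul_sq_le {𝕜 : Type*} [Field 𝕜] [LinearOrder 𝕜]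
    [IsStrictOrderedRing 𝕜] [FloorRing 𝕜] (x y : 𝕜) :
    ∃ m n : ℤ, |(x - m) ^ 2 - 3 * (y - n) ^ 2| ≤ 1 / 2 := by
  obtain ⟨hx, hx'⟩ := abs_le.mp (abs_sub_round x)
  obtain ⟨hy, hy'⟩ := abs_le.mp (abs_sub_round y)
  by_cases hsmall : 3 * (y - round y) ^ 2 - (x - round x) ^ 2 ≤ 1 / 2
  · exact ⟨round x, round y, abs_le.mpr ⟨by linarith, by nlinarith⟩⟩
  rcases le_total 0 (x - round x) with hpos | hneg
  · refine ⟨round x + 1, round y, abs_le.mpr ?_⟩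
    push_cast
    constructor <;> nlinarith
  · refine ⟨round x - 1, round y, abs_le.mpr ?_⟩
    push_cast
    constructor <;> nlinarith

theorem eucMin_of_sq_eq_three {K : Type*} [Field K] [NumberField K] {θ : K} (hθ : θ ^ 2 = 3)
    (hK : Module.finrank ℚ K = 2) : eucMin K = 1 / 2 := by
  have hθ' : θ ^ 2 = algebraMap ℚ K 3 := by rw [hθ, map_ofNat]
  have hsq : ¬IsSquare (3 : ℚ) := by norm_num
  have hθ_int : IsIntegral ℤ θ := by
    refine IsIntegral.of_pow two_pos (hθ ▸ ?_)
    simpa using isIntegral_algebraMap (R := ℤ) (A := K) (x := 3)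
  let t : 𝓞 K := ⟨θ, hθ_int⟩
  have hnorm (x y : ℚ) : Algebra.norm ℚ (algebraMap ℚ K x + algebraMap ℚ K y * θ) =
      x ^ 2 - 3 * y ^ 2 := norm_add_mul_sqrt hθ' hsq hK x y
  have hϖ : |Algebra.norm ℚ ((1 + t : 𝓞 K) : K)| = 2 := by
    have h := hnorm 1 1
    rw [map_one, one_mul] at h
    simp only [map_add, map_one, show (t : K) = θ from rfl, h]
    norm_num
  rw [eucMin_eq_inv_abs_norm (not_isUnit_of_one_lt_abs_norm (hϖ ▸ one_lt_two)), hϖ]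
  · norm_num
  intro ξ
  obtain ⟨x, y, rfl⟩ := exists_eq_add_mul_sqrt hθ' hsq hK ξ
  obtain ⟨m, n, hmn⟩ := exists_int_abs_sq_sub_three_mul_sq_le x y
  refine ⟨m + n * t, ?_⟩
  have hsub : algebraMap ℚ K x + algebraMap ℚ K y * θ - ((m + n * t : 𝓞 K) : K) =
      algebraMap ℚ K (x - m) + algebraMap ℚ K (y - n) * θ := by
    simp only [map_add, map_sub, map_mul, map_intCast, show (t : K) = θ from rfl]
    ring
  rw [hsub, hnorm, hϖ, ← one_div]
  exact hmn

/-- The family `1, u, i, i * u`, where `i = ζ ^ 3` and `u = ζ - ζ ^ 2`. For a primitive twelfth root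
of unity `ζ` it is a `ℚ`-basis of `ℚ(ζ)`, in whose coordinates `ζ` acts as an isometry of `ℚ⁴`. -/
def twelfthBasis {R : Type*} [CommRing R] (ζ : R) : Fin 4 → R :=
  ![1, ζ - ζ ^ 2, ζ ^ 3, ζ ^ 3 * (ζ - ζ ^ 2)]

section NormForm

section CommRing

variable {R : Type*} [CommRing R]

/-- For the element `ξ` with coordinates `v` in `twelfthBasis`, the coefficient `q` of `√3` in
`ξ * conj ξ = p + q√3`. -/
def sqrtThreePart (v : Fin 4 → R) : R :=
  v 0 * (v 1 + v 3) + v 2 * (v 3 - v 1) - v 1 ^ 2 - v 3 ^ 2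

/-- For the element `ξ` with coordinates `v` in `twelfthBasis`, the rational part `p` of
`ξ * conj ξ = p + q√3`; it is encoded through `p + q = ∑ i, v i ^ 2`. -/
def rationalPart (v : Fin 4 → R) : R := ∑ i, v i ^ 2 - sqrtThreePart v

/-- The norm form of `ℚ(ζ₁₂)` in the coordinates of `twelfthBasis`. -/
def normForm (v : Fin 4 → R) : R := rationalPart v ^ 2 - 3 * sqrtThreePart v ^ 2

/-- For the element `ξ` with coordinates `v` in `twelfthBasis`, the rational part of
`ξ + conj ξ`. -/
def tracePart : (Fin 4 → R) →ₗ[R] R :=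
  (2 : R) • LinearMap.proj 0 - LinearMap.proj 1 - LinearMap.proj 3

theorem tracePart_apply (v : Fin 4 → R) : tracePart v = 2 * v 0 - v 1 - v 3 := rfl

/-- The shift `e₀ ↦ e₁ ↦ e₂ ↦ e₃ ↦ -e₀`. In the coordinates of `twelfthBasis` it is `ξ ↦ u * σ ξ`,
where `u = ζ - ζ ^ 2` is a unit and `σ` the automorphism fixing `i` and negating `√3`. -/
def negacyclicShift : Module.End R (Fin 4 → R) where
  toFun v := ![-v 3, v 0, v 1, v 2]
  map_add' v w := by ext i; fin_cases i <;> simp [add_comm]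
  map_smul' c v := by ext i; fin_cases i <;> simp

theorem negacyclicShift_apply (v : Fin 4 → R) : negacyclicShift v = ![-v 3, v 0, v 1, v 2] := rfl

theorem negacyclicShift_pow_four : (negacyclicShift : Module.End R (Fin 4 → R)) ^ 4 = -1 := by
  ext i j
  fin_cases i <;> fin_cases j <;> simp [pow_succ, negacyclicShift_apply]

theorem sum_sq_negacyclicShift_pow (k : ℕ) (v : Fin 4 → R) :
    ∑ i, (negacyclicShift ^ k) v i ^ 2 = ∑ i, v i ^ 2 := by
  induction k generalizing v with
  | zero => rfl
  | succ k ih =>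
    rw [pow_succ, Module.End.mul_apply, ih, negacyclicShift_apply]
    simp only [Fin.sum_univ_four, Matrix.cons_val]
    ring

theorem sum_sq_apply_zero_negacyclicShift_pow (v : Fin 4 → R) :
    ∑ j ∈ Finset.range 4, (negacyclicShift ^ j) v 0 ^ 2 = ∑ i, v i ^ 2 := by
  simp only [Finset.sum_range_succ, Finset.sum_range_zero, pow_succ, pow_zero,
    Module.End.mul_apply, Module.End.one_apply, negacyclicShift_apply, Fin.sum_univ_four,
    Matrix.cons_val]
  ring

theorem sum_sq_tracePart_negacyclicShift_pow (v : Fin 4 → R) :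
    ∑ j ∈ Finset.range 4, tracePart ((negacyclicShift ^ j) v) ^ 2 = 6 * ∑ i, v i ^ 2 := by
  simp only [tracePart_apply, Finset.sum_range_succ, Finset.sum_range_zero, pow_succ, pow_zero,
    Module.End.mul_apply, Module.End.one_apply, negacyclicShift_apply, Fin.sum_univ_four,
    Matrix.cons_val]
  ring

theorem normForm_negacyclicShift (v : Fin 4 → R) :
    normForm (negacyclicShift v) = normForm v := by
  simp only [normForm, rationalPart, sqrtThreePart, negacyclicShift_apply, Fin.sum_univ_four,
    Matrix.cons_val]
  ring

theorem two_mul_normForm (v : Fin 4 → R) :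
    2 * normForm v = 3 * (∑ i, v i ^ 2) ^ 2 - (rationalPart v + 3 * sqrtThreePart v) ^ 2 := by
  simp only [normForm, rationalPart]
  ring

theorem sum_sq_sub_single_zero (v : Fin 4 → R) :
    ∑ i, (v - Pi.single 0 1 : Fin 4 → R) i ^ 2 = ∑ i, v i ^ 2 + 1 - 2 * v 0 := by
  simp only [Fin.sum_univ_four, Pi.sub_apply, Pi.single_apply, Fin.reduceEq, if_true, if_false]
  ring

theorem rationalPart_sub_single_zero (v : Fin 4 → R) :
    rationalPart (v - Pi.single 0 1) = rationalPart v + 1 - tracePart v := by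
  rw [rationalPart, sum_sq_sub_single_zero, rationalPart, tracePart_apply]
  simp only [sqrtThreePart, Pi.sub_apply, Pi.single_apply, Fin.reduceEq, if_true, if_false]
  ring

end CommRing

variable {𝕜 : Type*} [Field 𝕜] [LinearOrder 𝕜] [IsStrictOrderedRing 𝕜]

theorem normForm_nonneg (v : Fin 4 → 𝕜) : 0 ≤ normForm v := by
  have hsos : normForm v =
      (v 0 ^ 2 - v 2 ^ 2 - v 0 * (v 1 + v 3) + v 2 * (v 3 - v 1) - 2 * v 1 * v 3) ^ 2 +
      (2 * v 0 * v 2 + v 0 * (v 1 - v 3) - v 2 * (v 1 + v 3) + v 1 ^ 2 - v 3 ^ 2) ^ 2 := by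
    simp only [normForm, rationalPart, sqrtThreePart, Fin.sum_univ_four]
    ring
  rw [hsos]
  positivity

theorem normForm_le_one {v : Fin 4 → 𝕜} (hv : ∑ i, v i ^ 2 ≤ 4 / 5) : normForm v ≤ 1 := by
  have hnonneg : 0 ≤ ∑ i, v i ^ 2 := Finset.sum_nonneg fun i _ ↦ sq_nonneg (v i)
  nlinarith [two_mul_normForm v, sq_nonneg (rationalPart v + 3 * sqrtThreePart v)]

theorem rationalPart_nonneg (v : Fin 4 → 𝕜) : 0 ≤ rationalPart v := by
  have hsos : rationalPart v = (v 0 - (v 1 + v 3) / 2) ^ 2 + (v 2 - (v 3 - v 1) / 2) ^ 2 +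
      3 * ((v 1 + v 3) / 2) ^ 2 + 3 * ((v 3 - v 1) / 2) ^ 2 := by
    simp only [rationalPart, sqrtThreePart, Fin.sum_univ_four]
    ring
  rw [hsos]
  positivity

theorem rationalPart_le (v : Fin 4 → 𝕜) : rationalPart v ≤ 5 / 2 * ∑ i, v i ^ 2 := by
  have hsos : 5 / 2 * ∑ i, v i ^ 2 - rationalPart v =
      (v 0 + (v 1 + v 3) / 2) ^ 2 + (v 2 + (v 3 - v 1) / 2) ^ 2 + (v 0 ^ 2 + v 2 ^ 2) / 2 := by
    simp only [rationalPart, sqrtThreePart, Fin.sum_univ_four]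
    ring
  rw [← sub_nonneg, hsos]
  positivity

theorem normForm_sub_single_zero_le_one_of_coord {v : Fin 4 → 𝕜} (hlo : 1 / 5 ≤ ∑ i, v i ^ 2)
    (hhi : ∑ i, v i ^ 2 ≤ 1 / 2) (hpos : 0 ≤ v 0) (hmax : ∑ i, v i ^ 2 ≤ 4 * v 0 ^ 2) :
    normForm (v - Pi.single 0 1) ≤ 1 := by
  apply normForm_le_one
  rw [sum_sq_sub_single_zero]
  have hcoord : ∑ i, v i ^ 2 + 1 / 5 ≤ 2 * v 0 := by
    apply le_of_sq_le_sq _ (by positivity)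
    nlinarith
  linarith

theorem normForm_sub_single_zero_le_one_of_trace {v : Fin 4 → 𝕜} (hv : ∑ i, v i ^ 2 ≤ 1 / 5)
    (hpos : 0 ≤ tracePart v) (hmax : 3 / 2 * ∑ i, v i ^ 2 ≤ tracePart v ^ 2) :
    normForm (v - Pi.single 0 1) ≤ 1 := by
  have hnonneg : 0 ≤ ∑ i, v i ^ 2 := Finset.sum_nonneg fun i _ ↦ sq_nonneg (v i)
  have htrace : rationalPart v ≤ tracePart v :=
    (rationalPart_le v).trans (le_of_sq_le_sq (by nlinarith) hpos)
  have hle : rationalPart (v - Pi.single 0 1) ≤ 1 := by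
    rw [rationalPart_sub_single_zero]
    linarith
  calc normForm (v - Pi.single 0 1)
      ≤ rationalPart (v - Pi.single 0 1) ^ 2 :=
        sub_le_self _ (mul_nonneg zero_le_three (sq_nonneg _))
    _ ≤ 1 := pow_le_one₀ (rationalPart_nonneg _) hle

theorem exists_normForm_negacyclicShift_pow_sub_single_le_one {v : Fin 4 → 𝕜}
    (hv : ∑ i, v i ^ 2 ≤ 1 / 2) :
    ∃ k, normForm ((negacyclicShift ^ k) v - Pi.single 0 1) ≤ 1 := by
  have hlen (k : ℕ) := sum_sq_negacyclicShift_pow k v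
  rcases le_total (1 / 5) (∑ i, v i ^ 2) with hlarge | hsmall
  · obtain ⟨k, hpos, hmax⟩ := exists_pow_apply_nonneg_and_sum_sq_le four_ne_zero
      negacyclicShift_pow_four (LinearMap.proj 0) v
    simp only [LinearMap.proj_apply, sum_sq_apply_zero_negacyclicShift_pow] at hpos hmax
    refine ⟨k, normForm_sub_single_zero_le_one_of_coord ?_ ?_ hpos ?_⟩
    · rwa [hlen]
    · rwa [hlen]
    · rw [hlen]
      exact_mod_cast hmax
  · obtain ⟨k, hpos, hmax⟩ := exists_pow_apply_nonneg_and_sum_sq_le (𝕜 := 𝕜) four_ne_zero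
      negacyclicShift_pow_four tracePart v
    rw [sum_sq_tracePart_negacyclicShift_pow] at hmax
    push_cast at hmax
    refine ⟨k, normForm_sub_single_zero_le_one_of_trace ?_ hpos ?_⟩
    · rwa [hlen]
    · rw [hlen]
      linarith

theorem exists_odd_normForm_sub_le_one_of_pow {R : Type*} [CommRing R] [LE R]
    {v : Fin 4 → R} (k : ℕ)
    (h : ∃ w : Fin 4 → ℤ, Odd (∑ i, w i) ∧
      normForm ((negacyclicShift ^ k) v - fun i ↦ (w i : R)) ≤ 1) :
    ∃ w : Fin 4 → ℤ, Odd (∑ i, w i) ∧ normForm (v - fun i ↦ (w i : R)) ≤ 1 := by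
  induction k with
  | zero => exact h
  | succ k ih =>
    obtain ⟨w, hodd, hw⟩ := h
    refine ih ⟨![w 1, w 2, w 3, -w 0], ?_, ?_⟩
    · have hsum : ∑ i, ![w 1, w 2, w 3, -w 0] i = ∑ i, w i - 2 * w 0 := by
        simp only [Fin.sum_univ_four, Matrix.cons_val]
        ring
      rw [hsum]
      exact hodd.sub_even (even_two_mul _)
    · rw [← normForm_negacyclicShift]
      refine le_of_eq_of_le (congrArg normForm ?_) hw
      rw [map_sub, pow_succ', Module.End.mul_apply]
      congr 1
      ext i
      fin_cases i <;> simp [negacyclicShift_apply]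

theorem exists_odd_normForm_sub_le_one {v : Fin 4 → 𝕜} (hv : ∑ i, v i ^ 2 ≤ 1 / 2) :
    ∃ w : Fin 4 → ℤ, Odd (∑ i, w i) ∧ normForm (v - fun i ↦ (w i : 𝕜)) ≤ 1 := by
  obtain ⟨k, hk⟩ := exists_normForm_negacyclicShift_pow_sub_single_le_one hv
  refine exists_odd_normForm_sub_le_one_of_pow k ⟨Pi.single 0 1, by simp, ?_⟩
  convert hk using 3
  ext i
  fin_cases i <;> simp

end NormForm

section TwelfthRoot

theorem pow_four_of_isPrimitiveRoot_twelve {R : Type*} [CommRing R] [IsDomain R] {ζ : R}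
    (hζ : IsPrimitiveRoot ζ 12) : ζ ^ 4 = ζ ^ 2 - 1 := by
  have hroot : (Polynomial.cyclotomic 6 R).eval (ζ ^ 2) = 0 :=
    (hζ.pow (by norm_num) (show 12 = 2 * 6 from rfl)).isRoot_cyclotomic (by norm_num)
  simp only [Polynomial.cyclotomic_six, Polynomial.eval_add, Polynomial.eval_sub,
    Polynomial.eval_pow, Polynomial.eval_X, Polynomial.eval_one] at hroot
  linear_combination hroot

section Congruence

variable {R : Type*} [CommRing R] {ζ : R}

theorem dvd_two_of_pow_four (hζ : ζ ^ 4 = ζ ^ 2 - 1) : 1 + ζ ^ 3 ∣ 2 :=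
  ⟨1 - ζ ^ 3, by linear_combination (ζ ^ 2 + 1) * hζ⟩

theorem dvd_twelfthBasis_sub_one (hζ : ζ ^ 4 = ζ ^ 2 - 1) (i : Fin 4) :
    1 + ζ ^ 3 ∣ twelfthBasis ζ i - 1 := by
  fin_cases i
  · exact ⟨0, by simp [twelfthBasis]⟩
  · refine ⟨ζ ^ 3 - ζ ^ 2, ?_⟩
    simp only [twelfthBasis, Fin.mk_one, Matrix.cons_val]
    grind
  · refine ⟨ζ ^ 3, ?_⟩
    simp only [twelfthBasis, Fin.reduceFinMk, Matrix.cons_val]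
    grind
  · refine ⟨ζ ^ 3 + ζ ^ 3 * (ζ ^ 3 - ζ ^ 2), ?_⟩
    simp only [twelfthBasis, Fin.reduceFinMk, Matrix.cons_val]
    grind

theorem dvd_sum_twelfthBasis_sub_sum (hζ : ζ ^ 4 = ζ ^ 2 - 1) (w : Fin 4 → ℤ) :
    1 + ζ ^ 3 ∣ ∑ i, w i • twelfthBasis ζ i - ((∑ i, w i : ℤ) : R) := by
  have hterm : ∑ i, w i • twelfthBasis ζ i - ((∑ i, w i : ℤ) : R) =
      ∑ i, (w i : R) * (twelfthBasis ζ i - 1) := by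
    simp only [zsmul_eq_mul, Int.cast_sum, mul_sub, mul_one, Finset.sum_sub_distrib]
  rw [hterm]
  exact Finset.dvd_sum fun i _ ↦ (dvd_twelfthBasis_sub_one hζ i).mul_left _

theorem dvd_sum_twelfthBasis_of_even (hζ : ζ ^ 4 = ζ ^ 2 - 1) {w : Fin 4 → ℤ}
    (hw : Even (∑ i, w i)) : 1 + ζ ^ 3 ∣ ∑ i, w i • twelfthBasis ζ i := by
  have hsum : 1 + ζ ^ 3 ∣ ((∑ i, w i : ℤ) : R) :=
    (dvd_two_of_pow_four hζ).trans (by simpa using map_dvd (Int.castRingHom R) hw.two_dvd)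
  exact (dvd_sub_left hsum).mp (dvd_sum_twelfthBasis_sub_sum hζ w)

theorem dvd_sum_twelfthBasis_add_one_of_odd (hζ : ζ ^ 4 = ζ ^ 2 - 1) {w : Fin 4 → ℤ}
    (hw : Odd (∑ i, w i)) : 1 + ζ ^ 3 ∣ ∑ i, w i • twelfthBasis ζ i + 1 := by
  have hsum : 1 + ζ ^ 3 ∣ ((∑ i, w i + 1 : ℤ) : R) :=
    (dvd_two_of_pow_four hζ).trans
      (by simpa using map_dvd (Int.castRingHom R) hw.add_one.two_dvd)
  convert dvd_add (dvd_sum_twelfthBasis_sub_sum hζ w) hsum using 1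
  push_cast
  ring

theorem dvd_or_exists_dvd_sub_pow (hζ : ζ ^ 4 = ζ ^ 2 - 1) (w : Fin 4 → ℤ) {α : R}
    (hα : α = ∑ i, w i • twelfthBasis ζ i ∨ α = ∑ i, w i • twelfthBasis ζ i + ζ) :
    1 + ζ ^ 3 ∣ α ∨ ∃ k, 1 + ζ ^ 3 ∣ α - ζ ^ k := by
  rcases Int.even_or_odd (∑ i, w i) with heven | hodd
  · have hdvd := dvd_sum_twelfthBasis_of_even hζ heven
    rcases hα with rfl | rfl
    · exact Or.inl hdvd
    · exact Or.inr ⟨1, by simpa using hdvd⟩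
  · have hdvd := dvd_sum_twelfthBasis_add_one_of_odd hζ hodd
    rcases hα with rfl | rfl
    · refine Or.inr ⟨0, ?_⟩
      convert hdvd.sub (dvd_two_of_pow_four hζ) using 1
      ring
    · refine Or.inr ⟨2, ?_⟩
      convert hdvd.add (dvd_twelfthBasis_sub_one hζ 1) using 1
      simp only [twelfthBasis, Matrix.cons_val_one, Matrix.cons_val_zero]
      ring

end Congruence

variable {L : Type*} [Field L] [CharZero L] {ζ : L}

theorem half_sum_twelfthBasis (hζ : ζ ^ 4 = ζ ^ 2 - 1) :
    ∑ i, (1 / 2 : ℚ) • twelfthBasis ζ i = ζ := by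
  simp only [Fin.sum_univ_four, twelfthBasis, Matrix.cons_val, ← Finset.smul_sum]
  simp only [Algebra.smul_def, eq_ratCast, Rat.cast_div, Rat.cast_one, Rat.cast_ofNat]
  linear_combination (1 - ζ) / 2 * hζ

theorem exists_basis_eq_twelfthBasis (hζ : IsPrimitiveRoot ζ 12)
    (hL : Module.finrank ℚ L = 4) : ∃ b : Module.Basis (Fin 4) ℚ L, ⇑b = twelfthBasis ζ := by
  have hdeg : (minpoly ℚ ζ).natDegree = 4 := by
    rw [← Polynomial.cyclotomic_eq_minpoly_rat hζ (by norm_num), Polynomial.natDegree_cyclotomic]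
    decide
  have : FiniteDimensional ℚ L := Module.finite_of_finrank_pos (hL ▸ four_pos)
  have hpow : Submodule.span ℚ (Set.range fun i : Fin (minpoly ℚ ζ).natDegree ↦ ζ ^ (i : ℕ)) = ⊤ :=
    (linearIndependent_pow ζ).span_eq_top_of_card_eq_finrank' (by rw [Fintype.card_fin, hdeg, hL])
  have hmem (i : Fin 4) : twelfthBasis ζ i ∈ Submodule.span ℚ (Set.range (twelfthBasis ζ)) :=
    Submodule.subset_span ⟨i, rfl⟩
  have hζmem : ζ ∈ Submodule.span ℚ (Set.range (twelfthBasis ζ)) := by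
    have hhalf := Submodule.sum_mem _ (t := Finset.univ) fun i _ ↦
      Submodule.smul_mem _ (1 / 2 : ℚ) (hmem i)
    rwa [half_sum_twelfthBasis (pow_four_of_isPrimitiveRoot_twelve hζ)] at hhalf
  have hspan : ⊤ ≤ Submodule.span ℚ (Set.range (twelfthBasis ζ)) := by
    rw [← hpow, Submodule.span_le]
    rintro _ ⟨⟨i, hi⟩, rfl⟩
    rw [hdeg] at hi
    interval_cases i
    · simpa [twelfthBasis] using hmem 0
    · simpa using hζmem
    · simpa [twelfthBasis] using Submodule.sub_mem _ hζmem (hmem 1)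
    · simpa [twelfthBasis] using hmem 2
  exact ⟨basisOfTopLeSpanOfCardEqFinrank _ hspan (by simp [hL]),
    coe_basisOfTopLeSpanOfCardEqFinrank _ _ _⟩

theorem norm_sum_twelfthBasis (hζ : IsPrimitiveRoot ζ 12) (hL : Module.finrank ℚ L = 4)
    (v : Fin 4 → ℚ) : Algebra.norm ℚ (∑ i, v i • twelfthBasis ζ i) = normForm v := by
  obtain ⟨b, hb⟩ := exists_basis_eq_twelfthBasis hζ hL
  have hζ₄ := pow_four_of_isPrimitiveRoot_twelve hζ
  -- The columns come from `u ^ 2 = (i - 1) * u - i`.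
  have hM : ∀ j, (∑ i, v i • twelfthBasis ζ i) * b j =
      ∑ i, !![v 0, v 3, -v 2, v 1;
        v 1, v 0 - v 1 - v 3, -v 3, v 3 - v 1 - v 2;
        v 2, -v 1, v 0, v 3;
        v 3, v 1 + v 2 - v 3, v 1, v 0 - v 1 - v 3] i j • b i := by
    intro j
    fin_cases j <;>
      simp only [hb, Fin.sum_univ_four, twelfthBasis, Algebra.smul_def, eq_ratCast, Fin.zero_eta,
        Fin.mk_one, Fin.reduceFinMk, Matrix.of_apply, Matrix.cons_val, Matrix.cons_val',
        Rat.cast_add, Rat.cast_sub, Rat.cast_neg] <;>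
      grind
  rw [algebraNorm_eq_det b hM, Matrix.det_succ_row_zero]
  simp only [normForm, rationalPart, sqrtThreePart, Fin.sum_univ_four, Matrix.det_fin_three,
    Matrix.submatrix_apply, Matrix.of_apply, Matrix.cons_val, Matrix.cons_val', Fin.succAbove,
    Fin.reduceSucc, Fin.reduceCastSucc, Fin.reduceLT, Fin.coe_ofNat_eq_mod, if_true, if_false]
  ring

theorem zeta_mul_sum_twelfthBasis (hζ : ζ ^ 4 = ζ ^ 2 - 1) (v : Fin 4 → ℚ) :
    ζ * ∑ i, v i • twelfthBasis ζ i = ∑ i, ![(v 0 + v 1 - v 2 + v 3) / 2,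
      (v 0 - v 1 - v 2 - v 3) / 2, (v 0 - v 1 + v 2 + v 3) / 2,
      (v 0 + v 1 + v 2 - v 3) / 2] i • twelfthBasis ζ i := by
  simp only [Fin.sum_univ_four, twelfthBasis, Algebra.smul_def, eq_ratCast, Matrix.cons_val,
    Rat.cast_div, Rat.cast_add, Rat.cast_sub, Rat.cast_ofNat]
  grind

/-- The elements whose coordinates in `twelfthBasis` have square length at most `c`. -/
def sqLengthBall (ζ : L) (c : ℚ) : Set L :=
  {x | ∃ r : Fin 4 → ℚ, ∑ i, r i ^ 2 ≤ c ∧ x = ∑ i, r i • twelfthBasis ζ i}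

theorem pow_mul_mem_sqLengthBall (hζ : ζ ^ 4 = ζ ^ 2 - 1) {c : ℚ} {x : L}
    (hx : x ∈ sqLengthBall ζ c) (k : ℕ) : ζ ^ k * x ∈ sqLengthBall ζ c := by
  induction k with
  | zero => simpa using hx
  | succ k ih =>
    obtain ⟨r, hr, hx⟩ := ih
    refine ⟨_, ?_, by rw [pow_succ', mul_assoc, hx, zeta_mul_sum_twelfthBasis hζ]⟩
    refine le_of_eq_of_le ?_ hr
    simp only [Fin.sum_univ_four, Matrix.cons_val]
    ring

theorem abs_norm_le_one_of_mem_sqLengthBall (hζ : IsPrimitiveRoot ζ 12)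
    (hL : Module.finrank ℚ L = 4) {x : L} (hx : x ∈ sqLengthBall ζ (4 / 5)) :
    |Algebra.norm ℚ x| ≤ 1 := by
  obtain ⟨r, hr, rfl⟩ := hx
  rw [norm_sum_twelfthBasis hζ hL, abs_of_nonneg (normForm_nonneg r)]
  exact normForm_le_one hr

end TwelfthRoot

section TwelfthCyclotomicField

variable {L : Type*} [Field L] [NumberField L] {ζ : L}

theorem coe_sum_twelfthBasis (z : 𝓞 L) (w : Fin 4 → ℤ) :
    ((∑ i, w i • twelfthBasis z i : 𝓞 L) : L) =
      ∑ i, (w i : ℚ) • twelfthBasis (z : L) i := by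
  simp [Fin.sum_univ_four, twelfthBasis, Algebra.smul_def]

theorem exists_dvd_add_one_abs_norm_sub_le_one {z : 𝓞 L} (hz : IsPrimitiveRoot z 12)
    (hL : Module.finrank ℚ L = 4) {x : L} (hx : x ∈ sqLengthBall (z : L) (1 / 2)) :
    ∃ e : 𝓞 L, 1 + z ^ 3 ∣ e + 1 ∧ |Algebra.norm ℚ (x - (e : L))| ≤ 1 := by
  obtain ⟨r, hr, rfl⟩ := hx
  obtain ⟨w, hodd, hw⟩ := exists_odd_normForm_sub_le_one hr
  refine ⟨∑ i, w i • twelfthBasis z i,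
    dvd_sum_twelfthBasis_add_one_of_odd (pow_four_of_isPrimitiveRoot_twelve hz) hodd, ?_⟩
  have hsub : ∑ i, r i • twelfthBasis (z : L) i - ((∑ i, w i • twelfthBasis z i : 𝓞 L) : L) =
      ∑ i, (r - fun i ↦ (w i : ℚ)) i • twelfthBasis (z : L) i := by
    simp only [coe_sum_twelfthBasis, Pi.sub_apply, sub_smul, Finset.sum_sub_distrib]
  rwa [hsub, norm_sum_twelfthBasis (hz.map_of_injective RingOfIntegers.coe_injective) hL,
    abs_of_nonneg (normForm_nonneg _)]

theorem exists_sub_mem_sqLengthBall {z : 𝓞 L} (hz : IsPrimitiveRoot z 12)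
    (hL : Module.finrank ℚ L = 4) (ξ : L) :
    ∃ α : 𝓞 L, (1 + z ^ 3 ∣ α ∨ ∃ k, 1 + z ^ 3 ∣ α - z ^ k) ∧
      ξ - (α : L) ∈ sqLengthBall (z : L) (1 / 2) := by
  have hζ : IsPrimitiveRoot (z : L) 12 := hz.map_of_injective RingOfIntegers.coe_injective
  have hz₄ := pow_four_of_isPrimitiveRoot_twelve hz
  obtain ⟨b, hb⟩ := exists_basis_eq_twelfthBasis hζ hL
  obtain ⟨w, hw⟩ := exists_int_sum_sq_sub_le_or (b.repr ξ)
  have hcard : (Fintype.card (Fin 4) : ℚ) / 8 = 1 / 2 := by norm_num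
  rw [hcard] at hw
  have hξ : ξ = ∑ i, b.repr ξ i • twelfthBasis (z : L) i := by rw [← hb, b.sum_repr]
  rcases hw with hw | hw
  · refine ⟨∑ i, w i • twelfthBasis z i, dvd_or_exists_dvd_sub_pow hz₄ w (Or.inl rfl), _, hw, ?_⟩
    conv_lhs => rw [hξ]
    simp only [coe_sum_twelfthBasis, sub_smul, Finset.sum_sub_distrib]
  · refine ⟨∑ i, w i • twelfthBasis z i + z, dvd_or_exists_dvd_sub_pow hz₄ w (Or.inr rfl),
      _, hw, ?_⟩
    conv_lhs => rw [hξ]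
    simp only [map_add, coe_sum_twelfthBasis, sub_smul, Finset.sum_sub_distrib,
      half_sum_twelfthBasis (pow_four_of_isPrimitiveRoot_twelve hζ), sub_add_eq_sub_sub]

theorem exists_dvd_abs_norm_sub_le_one {z : 𝓞 L} (hz : IsPrimitiveRoot z 12)
    (hL : Module.finrank ℚ L = 4) (ξ : L) :
    ∃ α : 𝓞 L, 1 + z ^ 3 ∣ α ∧ |Algebra.norm ℚ (ξ - (α : L))| ≤ 1 := by
  have hζ : IsPrimitiveRoot (z : L) 12 := hz.map_of_injective RingOfIntegers.coe_injective
  obtain ⟨α, hα, hmem⟩ := exists_sub_mem_sqLengthBall hz hL ξ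
  rcases hα with hα | ⟨k, hα⟩
  · obtain ⟨r, hr, hx⟩ := hmem
    exact ⟨α, hα, abs_norm_le_one_of_mem_sqLengthBall hζ hL ⟨r, hr.trans (by norm_num), hx⟩⟩
  · obtain ⟨e, he, hnorm⟩ := exists_dvd_add_one_abs_norm_sub_le_one hz hL
      (pow_mul_mem_sqLengthBall (pow_four_of_isPrimitiveRoot_twelve hζ) hmem (11 * k))
    refine ⟨α + z ^ k * e, ?_, ?_⟩
    · convert hα.add (he.mul_left (z ^ k)) using 1
      ring
    · have hinv : (z : L) ^ k * (z : L) ^ (11 * k) = 1 := by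
        rw [← pow_add, show k + 11 * k = 12 * k by ring, pow_mul, hζ.pow_eq_one, one_pow]
      have hrot : ξ - ((α + z ^ k * e : 𝓞 L) : L) =
          (z : L) ^ k * ((z : L) ^ (11 * k) * (ξ - (α : L)) - (e : L)) := by
        simp only [map_add, map_mul, map_pow]
        linear_combination (α - ξ : L) * hinv
      rwa [hrot, map_mul, abs_mul, map_pow, abs_pow,
        abs_norm_eq_one_of_pow_eq_one (by norm_num) hζ.pow_eq_one, one_pow, one_mul]

theorem eucMin_of_isPrimitiveRoot_twelve (hζ : IsPrimitiveRoot ζ 12)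
    (hL : Module.finrank ℚ L = 4) : eucMin L = 1 / 4 := by
  obtain ⟨z, rfl⟩ : ∃ z : 𝓞 L, (z : L) = ζ := ⟨hζ.toInteger, rfl⟩
  have hz : IsPrimitiveRoot z 12 := hζ.of_map_of_injective RingOfIntegers.coe_injective
  have hnorm : |Algebra.norm ℚ ((1 + z ^ 3 : 𝓞 L) : L)| = 4 := by
    have hcoord : ((1 + z ^ 3 : 𝓞 L) : L) =
        ∑ i, ![(1 : ℚ), 0, 1, 0] i • twelfthBasis (z : L) i := by
      simp [Fin.sum_univ_four, twelfthBasis]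
    rw [hcoord, norm_sum_twelfthBasis hζ hL]
    simp only [normForm, rationalPart, sqrtThreePart, Fin.sum_univ_four, Matrix.cons_val]
    norm_num
  have hnonunit : ¬IsUnit (1 + z ^ 3) :=
    not_isUnit_of_one_lt_abs_norm (by rw [hnorm]; norm_num)
  rw [eucMin_eq_inv_abs_norm hnonunit, hnorm]
  · norm_num
  intro ξ
  obtain ⟨α, ⟨η, hα⟩, hη⟩ :=
    exists_dvd_abs_norm_sub_le_one hz hL (((1 + z ^ 3 : 𝓞 L) : L) * ξ)
  refine ⟨η, ?_⟩
  have hsub : ((1 + z ^ 3 : 𝓞 L) : L) * ξ - (α : L) = ((1 + z ^ 3 : 𝓞 L) : L) * (ξ - (η : L)) := by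
    simp only [hα, mul_sub, map_mul]
  rw [hsub, map_mul, abs_mul, hnorm] at hη
  rw [hnorm]
  linarith

end TwelfthCyclotomicField

theorem eucMin_Q_zeta12_and_Q_sqrt3
    {L K : Type*} [Field L] [Field K] [NumberField L] [NumberField K]
    (ζ : L) (hζ : IsPrimitiveRoot ζ 12) (hL : Module.finrank ℚ L = 4)
    (θ : K) (hθ : θ ^ 2 = 3) (hK : Module.finrank ℚ K = 2) :
    eucMin K = 1 / 2 ∧ eucMin L = 1 / 4 ∧ eucMin L = (eucMin K) ^ 2 := by
  have hMK := eucMin_of_sq_eq_three hθ hK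
  have hML := eucMin_of_isPrimitiveRoot_twelve hζ hL
  refine ⟨hMK, hML, ?_⟩
  rw [hMK, hML]
  norm_num
end

section
/- The field K = ℚ(√(−2+√2)) (the cyclic quartic field of conductor 16) is not norm-Euclidean. -/
open NumberField

def IsNormEuclidean (K : Type*) [Field K] [NumberField K] : Prop :=
  ∀ ξ : K, ∃ η : 𝓞 K, |Algebra.norm ℚ (ξ - (η : K))| < 1

/-! Write `K = ℚ(θ)` with `θ² = δ - 2` and `δ² = 2`. Since `X⁴ + 4X² + 2` is Eisenstein at `2` and
has discriminant `2¹¹`, the ring of integers is `ℤ[θ]`, with `ℤ`-basis `1, δ, θ, δθ`.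
No integer is close to `ξ = (1 + δθ)/2`: for `η` integral, `α = 2(ξ - η)` has relative norm
`A + Bδ` in `ℤ[√2]`, totally positive with `A ≡ 5 (mod 8)` and `B ≡ 2 (mod 4)`. Hence
`N(α) = A² - 2B²` is nonnegative and congruent to `1` modulo `16`. It is not `1`: writing
`A = 8k + 5`, that would give `(4k + 3)(2k + 1) = (B/2)²` with coprime factors, making `4k + 3 > 0`
a square, impossible modulo `4`. So `N(α) ≥ 17` and `N(ξ - η) ≥ 17/16`. -/

open Polynomial IntermediateField Module

section QuadraticTower

variable {F K : Type*} [Field F] [Field K] [Algebra F K]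

lemma norm_add_mul_of_sq_eq_algebraMap {t : F} {θ : K} (hθ : θ ^ 2 = algebraMap F K t)
    (hmem : θ ∉ (algebraMap F K).range) (h2 : finrank F K = 2) (x y : F) :
    Algebra.norm F (algebraMap F K x + algebraMap F K y * θ) = x ^ 2 - t * y ^ 2 := by
  have hli : LinearIndependent F ![1, θ] := by
    refine (LinearIndependent.pair_iff' one_ne_zero).2 fun a ha => hmem ⟨a, ?_⟩
    rw [← ha, Algebra.algebraMap_eq_smul_one]
  let b : Basis (Fin 2) F K := basisOfLinearIndependentOfCardEqFinrank hli (by simp [h2])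
  have hmatrix : Algebra.leftMulMatrix b (algebraMap F K x + algebraMap F K y * θ) =
      !![x, t * y; y, x] := by
    have hmul : (algebraMap F K x + algebraMap F K y * θ) * θ =
        algebraMap F K t * algebraMap F K y + algebraMap F K x * θ := by
      linear_combination algebraMap F K y * hθ
    rw [Algebra.leftMulMatrix_apply, ← LinearEquiv.eq_symm_apply, LinearMap.toMatrix_symm]
    refine b.ext fun j => ?_
    rw [Matrix.toLin_self]
    fin_cases j
    · simp [b, Algebra.smul_def]
    · simpa [b, Algebra.smul_def, add_mul] using hmul
  rw [Algebra.norm_eq_matrix_det b, hmatrix, Matrix.det_fin_two_of]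
  ring

variable {m : F} {δ : K}

lemma notMem_range_algebraMap_of_sq_eq (hm : ¬IsSquare m) (hδ : δ ^ 2 = algebraMap F K m) :
    δ ∉ (algebraMap F K).range := by
  rintro ⟨r, rfl⟩
  refine hm ⟨r, (algebraMap F K).injective ?_⟩
  rw [← hδ, ← map_pow, sq]

lemma finrank_adjoin_sqrt (hm : ¬IsSquare m) (hδ : δ ^ 2 = algebraMap F K m) :
    finrank F F⟮δ⟯ = 2 := by
  have hirr : Irreducible (X ^ 2 - C m) :=
    (X_pow_sub_C_irreducible_iff_of_prime Nat.prime_two).2 fun r hr => hm ⟨r, by rw [← hr, sq]⟩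
  have hroot : aeval δ (X ^ 2 - C m) = 0 := by simp [hδ]
  have hmonic : (X ^ 2 - C m).Monic := monic_X_pow_sub_C m two_ne_zero
  rw [adjoin.finrank ⟨_, hmonic, hroot⟩, ← minpoly.eq_of_irreducible_of_monic hirr hroot hmonic,
    natDegree_X_pow_sub_C]

variable {u v : F} {θ : K}

lemma norm_of_adjoin_sqrt_sqrt (hm : ¬IsSquare m) (hδ : δ ^ 2 = algebraMap F K m)
    (hθ : θ ^ 2 = algebraMap F K u + algebraMap F K v * δ) (htop : F⟮θ⟯ = ⊤)
    (h4 : finrank F K = 4) (a b c d : F) :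
    Algebra.norm F (algebraMap F K a + algebraMap F K b * δ +
        (algebraMap F K c + algebraMap F K d * δ) * θ) =
      (a ^ 2 + m * b ^ 2 - u * (c ^ 2 + m * d ^ 2) - 2 * m * v * c * d) ^ 2 -
        m * (2 * a * b - v * (c ^ 2 + m * d ^ 2) - 2 * u * c * d) ^ 2 := by
  have hbase : finrank F F⟮δ⟯ = 2 := finrank_adjoin_sqrt hm hδ
  have htower : finrank F⟮δ⟯ K = 2 := by
    have := finrank_mul_finrank F F⟮δ⟯ K
    rw [hbase, h4] at this
    omega
  let ε : F⟮δ⟯ := AdjoinSimple.gen F δ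
  have hε : ε ^ 2 = algebraMap F F⟮δ⟯ m := Subtype.ext hδ
  have hmem : θ ∉ (algebraMap F⟮δ⟯ K).range := by
    rintro ⟨x, rfl⟩
    have hle : F⟮(x : K)⟯ ≤ F⟮δ⟯ := adjoin_simple_le_iff.2 x.2
    have hδtop : F⟮δ⟯ = ⊤ := top_le_iff.1 (htop ▸ hle)
    rw [hδtop, finrank_top', h4] at hbase
    omega
  have : FiniteDimensional F F⟮δ⟯ := FiniteDimensional.of_finrank_pos (by omega)
  have : FiniteDimensional F⟮δ⟯ K := FiniteDimensional.of_finrank_pos (by omega)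
  let ι := algebraMap F F⟮δ⟯
  have hrel := norm_add_mul_of_sq_eq_algebraMap (t := ι u + ι v * ε) hθ hmem htower
    (ι a + ι b * ε) (ι c + ι d * ε)
  have hsplit : (ι a + ι b * ε) ^ 2 - (ι u + ι v * ε) * (ι c + ι d * ε) ^ 2 =
      ι (a ^ 2 + m * b ^ 2 - u * (c ^ 2 + m * d ^ 2) - 2 * m * v * c * d) +
        ι (2 * a * b - v * (c ^ 2 + m * d ^ 2) - 2 * u * c * d) * ε := by
    simp only [map_add, map_sub, map_mul, map_pow, map_ofNat]
    linear_combination (ι b ^ 2 - 2 * ι v * ι c * ι d - ι u * ι d ^ 2 - ι v * ι d ^ 2 * ε) * hε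
  rw [← norm_add_mul_of_sq_eq_algebraMap hε (notMem_range_algebraMap_of_sq_eq hm hε) hbase,
    ← hsplit, ← hrel, Algebra.norm_norm]
  rfl

end QuadraticTower

section Integers

variable {R : Type*} [CommRing R]

lemma minpoly_eq_of_irreducible_of_monic [IsDomain R] [IsIntegrallyClosed R] {S : Type*}
    [CommRing S] [IsDomain S] [Algebra R S] [IsTorsionFree R S] {f : R[X]} {θ : S}
    (hirr : Irreducible f) (hmonic : f.Monic) (hroot : aeval θ f = 0) : minpoly R θ = f := by
  have hint : IsIntegral R θ := ⟨f, hmonic, hroot⟩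
  exact eq_of_monic_of_associated (minpoly.monic hint) hmonic <|
    (minpoly.irreducible hint).associated_of_dvd hirr (minpoly.isIntegrallyClosed_dvd hint hroot)

lemma mem_adjoin_of_isEisensteinAt_of_discr_dvd [IsDomain R] [IsIntegrallyClosed R]
    {F K : Type*} [Field F] [Algebra R F] [IsFractionRing R F] [Field K] [Algebra F K]
    [Algebra.IsSeparable F K] [Algebra R K] [IsScalarTower R F K] {B : PowerBasis F K} {p D : R}
    {n : ℕ} (hp : Prime p) (hint : IsIntegral R B.gen)
    (hdiscr : Algebra.discr F B.basis = algebraMap R F D) (hdvd : D ∣ p ^ n)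
    (heis : (minpoly R B.gen).IsEisensteinAt (Ideal.span {p})) {z : K} (hz : IsIntegral R z) :
    z ∈ Algebra.adjoin R {B.gen} := by
  have : FiniteDimensional F K := B.finite
  have hDz : D • z ∈ Algebra.adjoin R {B.gen} := by
    simpa only [hdiscr, algebraMap_smul] using
      Algebra.discr_mul_isIntegral_mem_adjoin F (B := B) hint hz
  obtain ⟨e, he⟩ := hdvd
  refine mem_adjoin_of_smul_prime_pow_smul_of_minpoly_isEisensteinAt (K := F) hp hint hz
    (n := n) ?_ heis
  rw [he, mul_comm, mul_smul]
  exact Subalgebra.smul_mem _ hDz e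

lemma exists_eq_sum_pow_of_mem_adjoin {A : Type*} [Semiring A] [Algebra R A] {f : R[X]} {θ z : A}
    (hmonic : f.Monic) (hroot : aeval θ f = 0) (hz : z ∈ Algebra.adjoin R {θ}) :
    ∃ c : ℕ → R, z = ∑ i ∈ Finset.range f.natDegree, c i • θ ^ i := by
  classical
  rw [← Subalgebra.mem_toSubmodule, ← Submodule.span_range_natDegree_eq_adjoin hmonic hroot,
    Finset.coe_image, Submodule.mem_span_image_finset_iff_exists_fun'] at hz
  obtain ⟨c, hc⟩ := hz
  exact ⟨c, hc.symm⟩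

end Integers

/-- The minimal polynomial of `√(-2 + √2)`, over `ℤ` so that Eisenstein's criterion at `2`
applies. -/
noncomputable def conductor16Poly : ℤ[X] := X ^ 4 + C 4 * X ^ 2 + C 2

lemma conductor16Poly_natDegree : conductor16Poly.natDegree = 4 := by
  unfold conductor16Poly
  compute_degree!

lemma conductor16Poly_monic : conductor16Poly.Monic := by
  unfold conductor16Poly
  monicity!

lemma derivative_conductor16Poly : derivative conductor16Poly = C 4 * X ^ 3 + C 8 * X := by
  simp only [conductor16Poly, derivative_add, derivative_C_mul, derivative_X_pow, derivative_C,
    ← mul_assoc, ← C_mul]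
  norm_num

lemma conductor16Poly_isEisensteinAt :
    conductor16Poly.IsEisensteinAt (Ideal.span {(2 : ℤ)}) := by
  have hcoeff (n : ℕ) : conductor16Poly.coeff n =
      (if n = 4 then 1 else 0) + 4 * (if n = 2 then 1 else 0) + if n = 0 then 2 else 0 := by
    simp only [conductor16Poly, coeff_add, coeff_C_mul, coeff_X_pow, coeff_C]
  refine conductor16Poly_monic.isEisensteinAt_of_mem_of_notMem ?_ ?_ ?_
  · rw [Ne, Ideal.span_singleton_eq_top, Int.isUnit_iff]
    omega
  · intro n hn
    rw [conductor16Poly_natDegree] at hn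
    rw [Ideal.mem_span_singleton, hcoeff]
    split_ifs <;> omega
  · rw [Ideal.span_singleton_pow, Ideal.mem_span_singleton, hcoeff]
    norm_num

lemma conductor16Poly_irreducible : Irreducible conductor16Poly :=
  conductor16Poly_isEisensteinAt.irreducible
    ((Ideal.span_singleton_prime two_ne_zero).2 Int.prime_two)
    conductor16Poly_monic.isPrimitive (by simp [conductor16Poly_natDegree])

/-- The rational part `A` of the norm `A + B√2` to `ℚ(√2)` of `p + q√2 + (r + s√2)√(-2 + √2)`,
over an arbitrary coefficient ring. -/
def relNormRe {R : Type*} [CommRing R] (p q r s : R) : R :=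
  p ^ 2 + 2 * q ^ 2 + 2 * r ^ 2 + 4 * s ^ 2 - 4 * r * s

/-- The coefficient `B` in the norm `A + B√2` to `ℚ(√2)` of
`p + q√2 + (r + s√2)√(-2 + √2)`, over an arbitrary coefficient ring. -/
def relNormIm {R : Type*} [CommRing R] (p q r s : R) : R :=
  2 * p * q + 4 * r * s - r ^ 2 - 2 * s ^ 2

section NormForm

lemma two_mul_relNormIm_sq_le (p q r s : ℝ) :
    2 * relNormIm p q r s ^ 2 ≤ relNormRe p q r s ^ 2 := by
  have hsq : √2 ^ 2 = (2 : ℝ) := Real.sq_sqrt zero_le_two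
  have hle : √2 ≤ 2 := by nlinarith [Real.sqrt_nonneg 2]
  have hpos : 0 ≤ (p + √2 * q) ^ 2 + (2 - √2) * (r + √2 * s) ^ 2 :=
    add_nonneg (sq_nonneg _) (mul_nonneg (sub_nonneg.2 hle) (sq_nonneg _))
  have hconj : 0 ≤ (p - √2 * q) ^ 2 + (2 + √2) * (r - √2 * s) ^ 2 := by positivity
  have hfactor : relNormRe p q r s ^ 2 - 2 * relNormIm p q r s ^ 2 =
      ((p + √2 * q) ^ 2 + (2 - √2) * (r + √2 * s) ^ 2) *
        ((p - √2 * q) ^ 2 + (2 + √2) * (r - √2 * s) ^ 2) := by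
    have h₁ : (p + √2 * q) ^ 2 + (2 - √2) * (r + √2 * s) ^ 2 =
        relNormRe p q r s + √2 * relNormIm p q r s := by
      unfold relNormRe relNormIm
      linear_combination (q ^ 2 - 2 * r * s + (2 - √2) * s ^ 2) * hsq
    have h₂ : (p - √2 * q) ^ 2 + (2 + √2) * (r - √2 * s) ^ 2 =
        relNormRe p q r s - √2 * relNormIm p q r s := by
      unfold relNormRe relNormIm
      linear_combination (q ^ 2 - 2 * r * s + (2 + √2) * s ^ 2) * hsq
    rw [h₁, h₂]
    linear_combination relNormIm p q r s ^ 2 * hsq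
  linarith [mul_nonneg hpos hconj]

lemma relNormRe_nonneg (p q r s : ℤ) : 0 ≤ relNormRe p q r s := by
  unfold relNormRe
  nlinarith [sq_nonneg p, sq_nonneg q, sq_nonneg (r - s), sq_nonneg s]

lemma emod_eight_ne_five_of_sq_sub_two_mul_sq_eq_one {A B : ℤ} (hA : 0 ≤ A)
    (h : A ^ 2 - 2 * B ^ 2 = 1) : A % 8 ≠ 5 := by
  intro hmod
  obtain ⟨k, rfl⟩ : ∃ k, A = 8 * k + 5 := ⟨A / 8, by omega⟩
  have hB : B ^ 2 = 4 * ((4 * k + 3) * (2 * k + 1)) := by linarith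
  obtain ⟨b, rfl⟩ : 2 ∣ B := by
    refine Int.prime_two.dvd_of_dvd_pow (n := 2) ?_
    omega
  have hcop : IsCoprime (4 * k + 3) (2 * k + 1) := ⟨1, -2, by ring⟩
  obtain ⟨a, ha | ha⟩ := Int.sq_of_isCoprime hcop (by linarith : _ = b ^ 2)
  · have hodd : Odd (a ^ 2) := ha ▸ ⟨2 * k + 1, by ring⟩
    have := Int.sq_mod_four_eq_one_of_odd ((Int.odd_pow' two_ne_zero).1 hodd)
    omega
  · nlinarith [sq_nonneg a]

variable {p q r s : ℤ}

lemma relNormRe_emod_eight (hp : Odd p) (hq : Even q) (hr : Even r) (hs : Odd s) :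
    relNormRe p q r s % 8 = 5 := by
  obtain ⟨P, rfl⟩ := hp
  obtain ⟨Q, rfl⟩ := hq.two_dvd
  obtain ⟨R, rfl⟩ := hr.two_dvd
  obtain ⟨S, rfl⟩ := hs
  obtain ⟨m, hm⟩ := (Int.even_mul_succ_self P).two_dvd
  have : relNormRe (2 * P + 1) (2 * Q) (2 * R) (2 * S + 1) =
      8 * (m + Q ^ 2 + R ^ 2 + 2 * S ^ 2 + 2 * S - R * (2 * S + 1)) + 5 := by
    unfold relNormRe
    linear_combination 4 * hm
  omega

lemma relNormIm_emod_four (hq : Even q) (hr : Even r) (hs : Odd s) :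
    relNormIm p q r s % 4 = 2 := by
  obtain ⟨Q, rfl⟩ := hq.two_dvd
  obtain ⟨R, rfl⟩ := hr.two_dvd
  obtain ⟨S, rfl⟩ := hs
  have : relNormIm p (2 * Q) (2 * R) (2 * S + 1) =
      4 * (p * Q + 2 * R * (2 * S + 1) - R ^ 2 - 2 * S ^ 2 - 2 * S - 1) + 2 := by
    unfold relNormIm
    ring
  omega

lemma sq_sub_two_mul_sq_emod_sixteen {A B : ℤ} (hA : A % 8 = 5) (hB : B % 4 = 2) :
    (A ^ 2 - 2 * B ^ 2) % 16 = 1 := by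
  obtain ⟨k, rfl⟩ : ∃ k, A = 8 * k + 5 := ⟨A / 8, by omega⟩
  obtain ⟨l, rfl⟩ : ∃ l, B = 4 * l + 2 := ⟨B / 4, by omega⟩
  ring_nf
  omega

lemma seventeen_le_relNormRe_sq_sub (hp : Odd p) (hq : Even q) (hr : Even r) (hs : Odd s) :
    17 ≤ relNormRe p q r s ^ 2 - 2 * relNormIm p q r s ^ 2 := by
  have hnonneg : 2 * relNormIm p q r s ^ 2 ≤ relNormRe p q r s ^ 2 := by
    have := two_mul_relNormIm_sq_le p q r s
    simp only [relNormRe, relNormIm] at this ⊢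
    exact_mod_cast this
  have hRe := relNormRe_emod_eight hp hq hr hs
  have hmod := sq_sub_two_mul_sq_emod_sixteen hRe (relNormIm_emod_four (p := p) hq hr hs)
  have hne : relNormRe p q r s ^ 2 - 2 * relNormIm p q r s ^ 2 ≠ 1 := fun h =>
    emod_eight_ne_five_of_sq_sub_two_mul_sq_eq_one (relNormRe_nonneg p q r s) h hRe
  omega

end NormForm

section Conductor16

lemma aeval_conductor16Poly {A : Type*} [CommRing A] {δ θ : A} (hδ : δ ^ 2 = 2)
    (hθ : θ ^ 2 = δ - 2) : aeval θ conductor16Poly = 0 := by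
  simp only [conductor16Poly, map_add, map_mul, map_pow, aeval_X, map_ofNat]
  linear_combination hδ + (θ ^ 2 + δ + 2) * hθ

lemma isIntegral_of_sq_eq_sub_two {A : Type*} [CommRing A] {δ θ : A} (hδ : δ ^ 2 = 2)
    (hθ : θ ^ 2 = δ - 2) : IsIntegral ℤ θ :=
  ⟨conductor16Poly, conductor16Poly_monic, aeval_conductor16Poly hδ hθ⟩

variable {K : Type*} [Field K] {δ θ : K}

lemma minpoly_int_eq_conductor16Poly [CharZero K] (hδ : δ ^ 2 = 2) (hθ : θ ^ 2 = δ - 2) :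
    minpoly ℤ θ = conductor16Poly :=
  minpoly_eq_of_irreducible_of_monic conductor16Poly_irreducible conductor16Poly_monic
    (aeval_conductor16Poly hδ hθ)

lemma minpoly_rat_eq_map_conductor16Poly [CharZero K] (hδ : δ ^ 2 = 2) (hθ : θ ^ 2 = δ - 2) :
    minpoly ℚ θ = conductor16Poly.map (algebraMap ℤ ℚ) := by
  rw [minpoly.isIntegrallyClosed_eq_field_fractions' ℚ (isIntegral_of_sq_eq_sub_two hδ hθ),
    minpoly_int_eq_conductor16Poly hδ hθ]

variable [NumberField K]

lemma adjoin_root_eq_top (hδ : δ ^ 2 = 2) (hθ : θ ^ 2 = δ - 2) (h4 : finrank ℚ K = 4) :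
    ℚ⟮θ⟯ = ⊤ := by
  rw [Field.primitive_element_iff_minpoly_natDegree_eq, minpoly_rat_eq_map_conductor16Poly hδ hθ,
    conductor16Poly_monic.natDegree_map, conductor16Poly_natDegree, h4]

lemma norm_eq_relNormRe_sq_sub (hδ : δ ^ 2 = 2) (hθ : θ ^ 2 = δ - 2) (h4 : finrank ℚ K = 4)
    (p q r s : ℚ) :
    Algebra.norm ℚ (p + q * δ + (r + s * δ) * θ : K) =
      relNormRe p q r s ^ 2 - 2 * relNormIm p q r s ^ 2 := by
  have h2 : ¬IsSquare (2 : ℚ) := by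
    rw [Rat.isSquare_ofNat_iff]
    exact Nat.prime_two.not_isSquare
  have hθ' : θ ^ 2 = algebraMap ℚ K (-2) + algebraMap ℚ K 1 * δ := by
    rw [hθ, map_neg, map_ofNat, map_one]
    ring
  have hnorm := norm_of_adjoin_sqrt_sqrt h2 (by simpa only [map_ofNat] using hδ) hθ'
    (adjoin_root_eq_top hδ hθ h4) h4 p q r s
  simp only [eq_ratCast] at hnorm
  rw [hnorm, relNormRe, relNormIm]
  ring

lemma exists_powerBasis_gen_eq_discr_eq (hδ : δ ^ 2 = 2) (hθ : θ ^ 2 = δ - 2)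
    (h4 : finrank ℚ K = 4) :
    ∃ B : PowerBasis ℚ K, B.gen = θ ∧ Algebra.discr ℚ B.basis = 2 ^ 11 := by
  have htop : Algebra.adjoin ℚ {θ} = ⊤ := by
    rw [← adjoin_simple_toSubalgebra_of_isAlgebraic (Algebra.IsAlgebraic.isAlgebraic θ),
      adjoin_root_eq_top hδ hθ h4, top_toSubalgebra]
  let B := PowerBasis.ofAdjoinEqTop (Algebra.IsIntegral.isIntegral θ) htop
  have hgen : B.gen = θ := PowerBasis.ofAdjoinEqTop_gen _ _
  refine ⟨B, hgen, ?_⟩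
  have hderiv : aeval θ (derivative (minpoly ℚ θ)) =
      ((0 : ℚ) + (0 : ℚ) * δ + ((0 : ℚ) + (4 : ℚ) * δ) * θ : K) := by
    rw [minpoly_rat_eq_map_conductor16Poly hδ hθ, derivative_map, aeval_map_algebraMap,
      derivative_conductor16Poly]
    simp only [map_add, map_mul, map_pow, aeval_X, map_ofNat, Rat.cast_zero, Rat.cast_ofNat]
    linear_combination 4 * θ * hθ
  rw [Algebra.discr_powerBasis_eq_norm, h4, hgen, hderiv, norm_eq_relNormRe_sq_sub hδ hθ h4]
  norm_num [relNormRe, relNormIm]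

lemma exists_int_coords_of_isIntegral (hδ : δ ^ 2 = 2) (hθ : θ ^ 2 = δ - 2)
    (h4 : finrank ℚ K = 4) {z : K} (hz : IsIntegral ℤ z) :
    ∃ p q r s : ℤ, z = p + q * δ + (r + s * δ) * θ := by
  obtain ⟨B, hgen, hdiscr⟩ := exists_powerBasis_gen_eq_discr_eq hδ hθ h4
  have hmem : z ∈ Algebra.adjoin ℤ {B.gen} := by
    refine mem_adjoin_of_isEisensteinAt_of_discr_dvd (D := 2 ^ 11) Int.prime_two ?_
      (by rw [hdiscr]; norm_num) dvd_rfl ?_ hz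
    · exact hgen ▸ isIntegral_of_sq_eq_sub_two hδ hθ
    · rw [hgen, minpoly_int_eq_conductor16Poly hδ hθ]
      exact conductor16Poly_isEisensteinAt
  rw [hgen] at hmem
  obtain ⟨c, hc⟩ := exists_eq_sum_pow_of_mem_adjoin conductor16Poly_monic
    (aeval_conductor16Poly hδ hθ) hmem
  refine ⟨c 0 - 2 * c 2, c 2, c 1 - 2 * c 3, c 3, ?_⟩
  simp only [conductor16Poly_natDegree, Finset.sum_range_succ, Finset.sum_range_zero,
    zsmul_eq_mul] at hc
  push_cast
  linear_combination hc + (c 2 + c 3 * θ : K) * hθ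

lemma seventeen_div_sixteen_le_norm_sub (hδ : δ ^ 2 = 2) (hθ : θ ^ 2 = δ - 2)
    (h4 : finrank ℚ K = 4) {z : K} (hz : IsIntegral ℤ z) :
    17 / 16 ≤ Algebra.norm ℚ ((1 + δ * θ) / 2 - z) := by
  obtain ⟨p, q, r, s, rfl⟩ := exists_int_coords_of_isIntegral hδ hθ h4 hz
  have hdouble : algebraMap ℚ K 2 * ((1 + δ * θ) / 2 - (p + q * δ + (r + s * δ) * θ)) =
      ((1 - 2 * p : ℤ) : ℚ) + ((-(2 * q) : ℤ) : ℚ) * δ +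
        (((-(2 * r) : ℤ) : ℚ) + ((1 - 2 * s : ℤ) : ℚ) * δ) * θ := by
    rw [map_ofNat]
    push_cast
    ring
  have hnorm := congrArg (Algebra.norm ℚ) hdouble
  rw [map_mul, Algebra.norm_algebraMap, h4, norm_eq_relNormRe_sq_sub hδ hθ h4] at hnorm
  have hform := seventeen_le_relNormRe_sq_sub (p := 1 - 2 * p) (q := -(2 * q)) (r := -(2 * r))
    (s := 1 - 2 * s) (by grind) (by grind) (by grind) (by grind)
  rw [← Int.cast_le (R := ℚ)] at hform
  simp only [relNormRe, relNormIm] at hnorm hform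
  push_cast at hnorm hform
  linarith

end Conductor16

/-- The cyclic quartic field of conductor 16, `K = ℚ(√(-2+√2))`,
generated by a root `θ` of `X⁴ + 4X² + 2`, is not norm-Euclidean. -/
theorem conductor16_not_normEuclidean
    {K : Type*} [Field K] [NumberField K]
    (θ : K) (hθ : (θ ^ 2 + 2) ^ 2 = 2) (h4 : Module.finrank ℚ K = 4) :
    ¬ IsNormEuclidean K := by
  intro h
  obtain ⟨η, hη⟩ := h ((1 + (θ ^ 2 + 2) * θ) / 2)
  have hle := seventeen_div_sixteen_le_norm_sub hθ (by ring) h4 η.isIntegral_coe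
  linarith [le_abs_self (Algebra.norm ℚ ((1 + (θ ^ 2 + 2) * θ) / 2 - (η : K)))]
end

section
/- The complex cyclic quartic number field of conductor 29 is not norm-Euclidean. -/
open NumberField

def IsTotallyImaginary (K : Type*) [Field K] [NumberField K] : Prop :=
  ∀ φ : K →+* ℂ, ¬ ComplexEmbedding.IsReal φ

/-!
Let `π` be the norm to `K` of `ζ₂₉ - 1`. It has norm `29` and generates the prime of `K` above the
totally ramified `29`, so every `β ≡ a (mod π)` has norm congruent to `a ^ 4` modulo `29`. If `K`
were norm-Euclidean, dividing `6` by `π` would leave a remainder `β` with `|N β| < 29` and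
`N β ≡ 6 ^ 4 ≡ 20 (mod 29)`, that is, `N β = 20` or `N β = -9`. But `2` and `3` are primitive roots
modulo `29`, hence inert in `ℚ(ζ₂₉)`, so the exponent of either prime in the norm of an element of
`K` is a multiple of `4`.
-/

open Module

section NormCongruence

variable {R S : Type*} [CommRing R] [CommRing S] [Algebra R S] [Free R S] [Module.Finite R S]

open Matrix in
theorem norm_algebraMap_sub_sub_pow_finrank_mem {I : Ideal R} (hI : I.IsRadical) {x : S}
    (hx : x ∈ (I.map (algebraMap R S)).radical) (a : R) :
    Algebra.norm R (algebraMap R S a - x) - a ^ finrank R S ∈ I := by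
  classical
  nontriviality R
  have := (Ideal.isRadical_iff_quotient_reduced I).mp hI
  let b := Free.chooseBasis R S
  let φ : S →+* Matrix _ _ (R ⧸ I) :=
    (Ideal.Quotient.mk I).mapMatrix.comp (Algebra.leftMulMatrix b).toRingHom
  have hφ (r : R) : φ (algebraMap R S r) = algebraMap _ _ (Ideal.Quotient.mk I r) := by
    ext i j
    obtain rfl | hij := eq_or_ne i j <;> simp [φ, Matrix.algebraMap_matrix_apply, *]
  have map_le_ker : I.map (algebraMap R S) ≤ RingHom.ker φ :=
    Ideal.map_le_iff_le_comap.mpr fun r hr ↦ by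
      rw [Ideal.mem_comap, RingHom.mem_ker, hφ, Ideal.Quotient.eq_zero_iff_mem.mpr hr, map_zero]
  -- Multiplication by `x` is nilpotent modulo `I`, so its characteristic polynomial is `X ^ n`.
  have nilpotent : IsNilpotent (φ x) := by
    obtain ⟨n, hn⟩ := hx
    exact ⟨n, by rw [← map_pow]; exact map_le_ker hn⟩
  have eval_charpoly_eq (c : R ⧸ I) : (φ x).charpoly.eval c = c ^ finrank R S := by
    have := (isNilpotent_charpoly_sub_pow_of_isNilpotent nilpotent).map (Polynomial.evalRingHom c)
    simpa [finrank_eq_card_chooseBasisIndex, sub_eq_zero] using this.eq_zero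
  rw [← Ideal.Quotient.eq, map_pow, Algebra.norm_eq_matrix_det b, RingHom.map_det]
  calc (φ (algebraMap R S a - x)).det
    _ = (scalar _ (Ideal.Quotient.mk I a) - φ x).det := by rw [map_sub, hφ]; rfl
    _ = Ideal.Quotient.mk I a ^ finrank R S := by rw [← eval_charpoly, eval_charpoly_eq]

end NormCongruence

section NumberField

variable {K : Type*} [Field K] [NumberField K]

theorem IsNormEuclidean.exists_dvd_sub_and_abs_norm_lt (hK : IsNormEuclidean K) (α : 𝓞 K)
    {γ : 𝓞 K} (hγ : γ ≠ 0) :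
    ∃ β : 𝓞 K, γ ∣ α - β ∧ |Algebra.norm ℤ β| < |Algebra.norm ℤ γ| := by
  obtain ⟨η, hη⟩ := hK (α / γ)
  refine ⟨α - γ * η, by simp, ?_⟩
  have hγ' : (γ : K) ≠ 0 := by simpa using hγ
  have remainder_eq : ((α - γ * η : 𝓞 K) : K) = γ * (α / γ - η) := by
    push_cast
    field_simp
  have norm_pos : 0 < |Algebra.norm ℚ (γ : K)| := abs_pos.mpr (Algebra.norm_ne_zero_iff.mpr hγ')
  suffices |Algebra.norm ℚ ((α - γ * η : 𝓞 K) : K)| < |Algebra.norm ℚ (γ : K)| by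
    simpa only [← Algebra.coe_norm_int, ← Int.cast_abs, Int.cast_lt] using this
  rw [remainder_eq, map_mul, abs_mul]
  exact mul_lt_of_lt_one_right norm_pos hη

variable {L : Type*} [Field L] [NumberField L]

theorem norm_algebraMap_eq_norm_pow_finrank [Algebra K L] (x : 𝓞 K) :
    Algebra.norm ℤ (algebraMap (𝓞 K) (𝓞 L) x) = Algebra.norm ℤ x ^ finrank K L := by
  have : ((Algebra.norm ℤ (algebraMap (𝓞 K) (𝓞 L) x) : ℤ) : ℚ) =
      (Algebra.norm ℤ x : ℚ) ^ finrank K L := by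
    rw [Algebra.coe_norm_int, Algebra.coe_norm_int, ← map_pow, ← Algebra.norm_algebraMap,
      Algebra.norm_norm]
    rfl
  exact_mod_cast this

theorem norm_ringOfIntegersNorm [Algebra K L] (x : 𝓞 L) :
    Algebra.norm ℤ (RingOfIntegers.norm K x) = Algebra.norm ℤ x := by
  have : (Algebra.norm ℤ (RingOfIntegers.norm K x) : ℚ) = Algebra.norm ℤ x := by
    rw [Algebra.coe_norm_int, Algebra.coe_norm_int, RingOfIntegers.coe_norm, Algebra.norm_norm]
  exact_mod_cast this

end NumberField

section PrimePowerCyclotomic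

variable {K : Type*} [Field K] [NumberField K] (p k : ℕ) [Fact p.Prime]

theorem norm_zeta_sub_one_mem_radical_map {L : Type*} [Field L] [NumberField L] [Algebra K L]
    [IsCyclotomicExtension {p ^ (k + 1)} ℚ L] {ζ : L} (hζ : IsPrimitiveRoot ζ (p ^ (k + 1))) :
    RingOfIntegers.norm K (hζ.toInteger - 1) ∈
      ((Ideal.span {(p : ℤ)}).map (algebraMap ℤ (𝓞 K))).radical := by
  have : IsGalois ℚ L := IsCyclotomicExtension.isGalois {p ^ (k + 1)} ℚ L
  have : IsGalois K L := IsGalois.tower_top_of_isGalois ℚ K L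
  refine ⟨finrank ℚ L, ?_⟩
  rw [← Ideal.comap_map_eq_self_of_faithfullyFlat (B := 𝓞 L) (Ideal.map _ _), Ideal.mem_comap,
    Ideal.map_map, ← IsScalarTower.algebraMap_eq,
    IsCyclotomicExtension.Rat.map_eq_span_zeta_sub_one_pow p k hζ, map_pow]
  exact Ideal.pow_mem_pow (Ideal.mem_span_singleton.mpr (RingOfIntegers.dvd_norm K _)) _

theorem IsNormEuclidean.exists_norm_modEq_pow_finrank (hK : IsNormEuclidean K) (L : Type*)
    [Field L] [NumberField L] [Algebra K L] [IsCyclotomicExtension {p ^ (k + 1)} ℚ L] (a : ℤ) :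
    ∃ β : 𝓞 K, |Algebra.norm ℤ β| < p ∧ Algebra.norm ℤ β ≡ a ^ finrank ℚ K [ZMOD p] := by
  have hp : p.Prime := Fact.out
  have hζ := IsCyclotomicExtension.zeta_spec (p ^ (k + 1)) ℚ L
  let π : 𝓞 K := RingOfIntegers.norm K (hζ.toInteger - 1)
  have abs_norm_π : |Algebra.norm ℤ π| = p := by
    rw [norm_ringOfIntegersNorm, Int.abs_eq_natAbs, Int.associated_iff_natAbs.mp
      (IsCyclotomicExtension.Rat.associated_norm_zeta_sub_one p k hζ), Int.natAbs_natCast]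
  have hπ : π ≠ 0 := by
    rw [← Algebra.norm_ne_zero_iff (R := ℤ), ← abs_ne_zero, abs_norm_π]
    exact_mod_cast hp.ne_zero
  obtain ⟨β, hβ, hlt⟩ := hK.exists_dvd_sub_and_abs_norm_lt (algebraMap ℤ (𝓞 K) a) hπ
  refine ⟨β, abs_norm_π ▸ hlt, Int.ModEq.symm (Int.modEq_iff_dvd.mpr ?_)⟩
  have radical_p : (Ideal.span {(p : ℤ)}).IsRadical :=
    isRadical_iff_span_singleton.mp (Nat.prime_iff_prime_int.mp hp).isRadical
  have hx := Ideal.mem_of_dvd _ hβ (norm_zeta_sub_one_mem_radical_map p k (K := K) hζ)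
  simpa only [sub_sub_cancel, RingOfIntegers.rank, Ideal.mem_span_singleton] using
    norm_algebraMap_sub_sub_pow_finrank_mem radical_p hx a

end PrimePowerCyclotomic

section Inert

variable {m q : ℕ} [NeZero m] {L : Type*} [Field L] [NumberField L]
  [IsCyclotomicExtension {m} ℚ L]

variable (m) in
theorem pow_orderOf_dvd_norm (hq : q.Prime) {x : 𝓞 L} (hx : (q : ℤ) ∣ Algebra.norm ℤ x) :
    (q : ℤ) ^ orderOf (q : ZMod m) ∣ Algebra.norm ℤ x := by
  obtain h0 | hpos := (orderOf (q : ZMod m)).eq_zero_or_pos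
  · simp [h0]
  have hqm : ¬ q ∣ m := by
    rw [← hq.coprime_iff_not_dvd, ← ZMod.isUnit_iff_coprime]
    exact (orderOf_pos_iff.mp hpos).isUnit
  have : Fact q.Prime := ⟨hq⟩
  rw [← Int.natCast_pow, Int.natCast_dvd, ← Ideal.absNorm_span_singleton]
  rw [Int.natCast_dvd, ← Ideal.absNorm_span_singleton] at hx
  obtain ⟨P, _, hP, P_dvd⟩ := Ideal.exists_isMaximal_dvd_of_dvd_absNorm' hq _ hx
  have : P.LiesOver (Ideal.span {(q : ℤ)}) := ⟨hP.symm⟩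
  rw [← IsCyclotomicExtension.Rat.inertiaDeg_eq_of_not_dvd q L P hqm, Ideal.pow_inertiaDeg]
  exact Ideal.absNorm_dvd_absNorm_of_le (Ideal.le_of_dvd P_dvd)

variable (m L) in
theorem pow_finrank_dvd_norm_of_orderOf_eq_totient {K : Type*} [Field K] [NumberField K]
    [Algebra K L] (hq : q.Prime) (hord : orderOf (q : ZMod m) = m.totient) {x : 𝓞 K}
    (hx : (q : ℤ) ∣ Algebra.norm ℤ x) :
    (q : ℤ) ^ finrank ℚ K ∣ Algebra.norm ℤ x := by
  have finrank_ne_zero : finrank K L ≠ 0 := finrank_pos.ne'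
  have hxL : (q : ℤ) ∣ Algebra.norm ℤ (algebraMap (𝓞 K) (𝓞 L) x) := by
    rw [norm_algebraMap_eq_norm_pow_finrank]
    exact dvd_pow hx finrank_ne_zero
  have hpow := pow_orderOf_dvd_norm m hq hxL
  rwa [hord, ← IsCyclotomicExtension.Rat.finrank m L, ← finrank_mul_finrank ℚ K L, pow_mul,
    norm_algebraMap_eq_norm_pow_finrank, Int.pow_dvd_pow_iff finrank_ne_zero] at hpow

end Inert

theorem orderOf_natCast_two_zmod_29 : orderOf ((2 : ℕ) : ZMod 29) = Nat.totient 29 := by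
  rw [Nat.totient_prime (by norm_num), orderOf_eq_iff (by norm_num)]
  decide

theorem orderOf_natCast_three_zmod_29 : orderOf ((3 : ℕ) : ZMod 29) = Nat.totient 29 := by
  rw [Nat.totient_prime (by norm_num), orderOf_eq_iff (by norm_num)]
  decide

/-- The complex (totally imaginary) cyclic quartic subfield of ℚ(ζ_29)
is not norm-Euclidean. -/
theorem cyclic_quartic_conductor_29_not_normEuclidean
    {K : Type*} [Field K] [NumberField K]
    (him : IsTotallyImaginary K) (h4 : Module.finrank ℚ K = 4)
    (hsub : Nonempty (K →ₐ[ℚ] CyclotomicField 29 ℚ)) :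
    ¬ IsNormEuclidean K := by
  intro hK
  obtain ⟨f⟩ := hsub
  let L := CyclotomicField 29 ℚ
  let : Algebra K L := f.toRingHom.toAlgebra
  have : IsCyclotomicExtension {29} ℚ L := CyclotomicField.isCyclotomicExtension 29 ℚ
  have : IsCyclotomicExtension {29 ^ (0 + 1)} ℚ L := this
  have : Fact (Nat.Prime 29) := ⟨by norm_num⟩
  obtain ⟨β, hlt, hmod⟩ := hK.exists_norm_modEq_pow_finrank 29 0 L 6
  have two_dvd : 2 ∣ Algebra.norm ℤ β → 2 ^ 4 ∣ Algebra.norm ℤ β := fun h ↦ h4 ▸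
    pow_finrank_dvd_norm_of_orderOf_eq_totient 29 L Nat.prime_two orderOf_natCast_two_zmod_29 h
  have three_dvd : 3 ∣ Algebra.norm ℤ β → 3 ^ 4 ∣ Algebra.norm ℤ β := fun h ↦ h4 ▸
    pow_finrank_dvd_norm_of_orderOf_eq_totient 29 L Nat.prime_three orderOf_natCast_three_zmod_29 h
  have norm_eq : Algebra.norm ℤ β = 20 ∨ Algebra.norm ℤ β = -9 := by
    rw [h4, Int.ModEq] at hmod
    rw [abs_lt] at hlt
    omega
  rcases norm_eq with h | h
  · norm_num [h] at two_dvd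
  · norm_num [h] at three_dvd
end

section
/- The complex cyclic quartic number field of conductor 37 is not norm-Euclidean. -/
open NumberField

/-!
This is Heilbronn's criterion. Let `K ⊆ ℚ(ζ₃₇)` have degree `4`, and let `π` be the relative norm of
`ζ₃₇ - 1` to `K`. Then `π` has norm `±37`, and `37` divides a power of `π` because `37` is totally
ramified. If `K` is norm-Euclidean, dividing `4` by `π` leaves a remainder `β ≡ 4 mod π` with
`|N β| < 37`, and total ramification turns the congruence into `N β ≡ 4 ^ 4 ≡ 34 mod 37`, so `N β`
is `34` or `-3`.

Neither is a norm. If a prime `q ≠ 37` divides `N β`, it divides `N_{ℚ(ζ₃₇)/ℚ}(β) = (N β) ^ 9`,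
hence so does the norm `q ^ f` of a prime ideal above `q`, where `f` is the order of `q` mod `37`.
For `q = 2` and `q = 3` this order is `36` and `18`, larger than `9`, so `q ^ 2 ∣ N β`; but `2`
divides `34` exactly once and `3` divides `-3` exactly once.
-/

open Module

section NormCongruence

theorem norm_sub_norm_mem_of_sub_mem_map {R S : Type*} [CommRing R] [CommRing S] [Algebra R S]
    [Module.Free R S] [Module.Finite R S] {I : Ideal R} {x y : S}
    (h : x - y ∈ I.map (algebraMap R S)) : Algebra.norm R x - Algebra.norm R y ∈ I := by
  classical
  let b := Free.chooseBasis R S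
  let φ := (Ideal.Quotient.mk I).mapMatrix.comp (Algebra.leftMulMatrix b).toRingHom
  have hφ : I.map (algebraMap R S) ≤ RingHom.ker φ := by
    refine Ideal.map_le_iff_le_comap.mpr fun r hr ↦ ?_
    ext i j
    simp [φ, AlgHom.commutes, Matrix.algebraMap_matrix_apply, apply_ite,
      Ideal.Quotient.eq_zero_iff_mem.mpr hr]
  have hxy : φ x = φ y := by
    rw [← sub_eq_zero, ← map_sub]
    exact hφ h
  rw [← Ideal.Quotient.mk_eq_mk_iff_sub_mem, Algebra.norm_eq_matrix_det b,
    Algebra.norm_eq_matrix_det b, RingHom.map_det, RingHom.map_det]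
  exact congrArg Matrix.det hxy

theorem dvd_sub_pow_prime_pow_iff {R : Type*} [CommRing R] {p : ℕ} (hp : p.Prime) (x y : R)
    (n : ℕ) : (p : R) ∣ (x - y) ^ p ^ n ↔ (p : R) ∣ x ^ p ^ n - y ^ p ^ n := by
  obtain ⟨r, hr⟩ := exists_add_pow_prime_pow_eq hp (x - y) y n
  rw [sub_add_cancel] at hr
  refine (dvd_iff_dvd_of_dvd_sub ⟨(x - y) * y * r, ?_⟩).symm
  rw [hr]
  ring

theorem norm_modEq_of_dvd_sub_pow {S : Type*} [CommRing S] [Module.Free ℤ S]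
    [Module.Finite ℤ S] {p : ℕ} [hp : Fact p.Prime] {x y : S} {k : ℕ}
    (h : (p : S) ∣ (x - y) ^ k) : Algebra.norm ℤ x ≡ Algebra.norm ℤ y [ZMOD p] := by
  have hdvd : (p : S) ∣ x ^ p ^ k - y ^ p ^ k :=
    (dvd_sub_pow_prime_pow_iff hp.out x y k).mp <|
      h.trans (pow_dvd_pow _ (Nat.lt_pow_self hp.out.one_lt).le)
  -- `x ^ p ^ k ≡ y ^ p ^ k mod p`, so the norms agree after raising to the power `p ^ k`, which is
  -- the identity on `ZMod p`.
  have hmem : x ^ p ^ k - y ^ p ^ k ∈ (Ideal.span {(p : ℤ)}).map (algebraMap ℤ S) := by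
    simpa [Ideal.map_span, Ideal.mem_span_singleton] using hdvd
  have hpow : Algebra.norm ℤ (y ^ p ^ k) ≡ Algebra.norm ℤ (x ^ p ^ k) [ZMOD p] :=
    Int.modEq_iff_dvd.mpr (Ideal.mem_span_singleton.mp (norm_sub_norm_mem_of_sub_mem_map hmem))
  rw [← ZMod.intCast_eq_intCast_iff] at hpow ⊢
  simpa using hpow.symm

end NormCongruence

section Heilbronn

variable {K : Type*} [Field K] [NumberField K]

theorem IsNormEuclidean.exists_abs_norm_sub_mul_lt (H : IsNormEuclidean K) (α : 𝓞 K) {π : 𝓞 K}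
    (hπ : π ≠ 0) : ∃ η : 𝓞 K, |Algebra.norm ℤ (α - η * π)| < |Algebra.norm ℤ π| := by
  have hπK : (π : K) ≠ 0 := RingOfIntegers.coe_ne_zero_iff.mpr hπ
  obtain ⟨η, hη⟩ := H (α / π)
  refine ⟨η, ?_⟩
  have hfactor : ((α - η * π : 𝓞 K) : K) = (α / π - η) * π := by
    rw [sub_mul, div_mul_cancel₀ _ hπK]
    simp only [map_sub, map_mul]
  have hpos : 0 < |Algebra.norm ℚ (π : K)| := abs_pos.mpr (Algebra.norm_ne_zero_iff.mpr hπK)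
  rw [← Int.cast_lt (R := ℚ), Int.cast_abs, Int.cast_abs, Algebra.coe_norm_int,
    Algebra.coe_norm_int, hfactor, map_mul, abs_mul]
  exact mul_lt_of_lt_one_left hpos hη

theorem IsNormEuclidean.exists_norm_modEq_of_dvd_pow (H : IsNormEuclidean K) {p : ℕ}
    [Fact p.Prime] {π : 𝓞 K} (hπ : π ≠ 0) {k : ℕ} (hram : (p : 𝓞 K) ∣ π ^ k) (α : 𝓞 K) :
    ∃ β : 𝓞 K, |Algebra.norm ℤ β| < |Algebra.norm ℤ π| ∧
      Algebra.norm ℤ β ≡ Algebra.norm ℤ α [ZMOD p] := by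
  obtain ⟨η, hη⟩ := H.exists_abs_norm_sub_mul_lt α hπ
  refine ⟨α - η * π, hη, norm_modEq_of_dvd_sub_pow (k := k) ?_⟩
  have hpow : (α - η * π - α) ^ k = (-η) ^ k * π ^ k := by ring
  exact hpow ▸ hram.mul_left _

end Heilbronn

section Cyclotomic

variable {K L : Type*} [Field K] [NumberField K] [Field L] [NumberField L] [Algebra K L]

theorem norm_int_norm (x : 𝓞 L) :
    Algebra.norm ℤ (RingOfIntegers.norm K x) = Algebra.norm ℤ x := by
  rw [← Int.cast_inj (α := ℚ), Algebra.coe_norm_int, Algebra.coe_norm_int,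
    RingOfIntegers.coe_norm, Algebra.norm_norm]

theorem norm_int_algebraMap (x : 𝓞 K) :
    Algebra.norm ℤ (algebraMap (𝓞 K) (𝓞 L) x) = Algebra.norm ℤ x ^ finrank K L := by
  rw [← norm_int_norm (K := K), RingOfIntegers.norm_algebraMap, map_pow]

variable (K L)

theorem exists_abs_norm_eq_prime_and_dvd_pow (p : ℕ) [hp : Fact p.Prime]
    [IsCyclotomicExtension {p} ℚ L] :
    ∃ π : 𝓞 K, |Algebra.norm ℤ π| = p ∧ (p : 𝓞 K) ∣ π ^ finrank ℚ K := by
  have hζ := IsCyclotomicExtension.zeta_spec p ℚ L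
  have hassoc := IsCyclotomicExtension.Rat.associated_zeta_sub_one_pow_prime p hζ
  have hdeg : finrank ℚ L = p - 1 := by
    rw [IsCyclotomicExtension.Rat.finrank p L, Nat.totient_prime hp.out]
  refine ⟨RingOfIntegers.norm K (hζ.toInteger - 1), ?_, ?_⟩
  · have hpow : (Algebra.norm ℤ (hζ.toInteger - 1)).natAbs ^ (p - 1) = p ^ (p - 1) := by
      have hnorm := Int.associated_iff_natAbs.mp (hassoc.map (Algebra.norm ℤ))
      rwa [map_pow, ← map_natCast (algebraMap ℤ (𝓞 L)), Algebra.norm_algebraMap,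
        RingOfIntegers.rank, hdeg, Int.natAbs_pow, Int.natAbs_pow, Int.natAbs_natCast] at hnorm
    rw [norm_int_norm, Int.abs_eq_natAbs,
      Nat.pow_left_injective (Nat.sub_ne_zero_of_lt hp.out.one_lt) hpow]
  · have hdvd := (hassoc.map (RingOfIntegers.norm K)).symm.dvd
    rw [← map_natCast (algebraMap (𝓞 K) (𝓞 L)), RingOfIntegers.norm_algebraMap, map_pow,
      ← hdeg, ← finrank_mul_finrank ℚ K L, pow_mul] at hdvd
    exact (IsIntegrallyClosed.pow_dvd_pow_iff finrank_pos.ne').mp hdvd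

theorem IsNormEuclidean.exists_norm_modEq_pow (H : IsNormEuclidean K) (p : ℕ)
    [hp : Fact p.Prime] [IsCyclotomicExtension {p} ℚ L] (a : ℤ) :
    ∃ β : 𝓞 K, |Algebra.norm ℤ β| < p ∧ Algebra.norm ℤ β ≡ a ^ finrank ℚ K [ZMOD p] := by
  obtain ⟨π, hπ, hram⟩ := exists_abs_norm_eq_prime_and_dvd_pow K L p
  have hπ0 : π ≠ 0 := by
    rintro rfl
    rw [Algebra.norm_zero, abs_zero] at hπ
    exact hp.out.ne_zero (mod_cast hπ.symm)
  obtain ⟨β, hlt, hmod⟩ := H.exists_norm_modEq_of_dvd_pow hπ0 hram (algebraMap ℤ (𝓞 K) a)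
  rw [Algebra.norm_algebraMap, RingOfIntegers.rank] at hmod
  exact ⟨β, hπ ▸ hlt, hmod⟩

end Cyclotomic

section Inertia

theorem pow_succ_dvd_of_pow_dvd_pow {M : Type*} [CommMonoidWithZero M] [IsCancelMulZero M]
    {q c : M} (hq : Prime q) {f k n : ℕ} (hf : n * k < f) (h : q ^ f ∣ c ^ n) :
    q ^ (k + 1) ∣ c := by
  rw [pow_dvd_iff_le_emultiplicity] at h ⊢
  rw [emultiplicity_pow hq] at h
  by_contra! hlt
  have hle : emultiplicity q c ≤ k := Order.le_of_lt_add_one (mod_cast hlt)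
  have hfk : (f : ℕ∞) ≤ (n * k : ℕ) := by
    push_cast
    exact h.trans (mul_le_mul_right hle _)
  exact hf.not_ge (mod_cast hfk)

variable {K L : Type*} [Field K] [NumberField K] [Field L] [NumberField L] [Algebra K L]
  (m : ℕ) [NeZero m] [IsCyclotomicExtension {m} ℚ L] {q : ℕ}

theorem prime_pow_orderOf_dvd_norm (hq : q.Prime) (hqm : ¬ q ∣ m)
    {x : 𝓞 L} (h : (q : ℤ) ∣ Algebra.norm ℤ x) :
    (q : ℤ) ^ orderOf (q : ZMod m) ∣ Algebra.norm ℤ x := by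
  have : Fact q.Prime := ⟨hq⟩
  have hspan : q ∣ Ideal.absNorm (Ideal.span {x}) := by
    rwa [Ideal.absNorm_span_singleton, ← Int.natCast_dvd]
  obtain ⟨Q, hQ, hQq, hQx⟩ := Ideal.exists_isMaximal_dvd_of_dvd_absNorm' hq _ hspan
  have : Q.LiesOver (Ideal.span {(q : ℤ)}) := ⟨hQq.symm⟩
  have hdvd := Ideal.absNorm_dvd_absNorm_of_le (Ideal.dvd_iff_le.mp hQx)
  rw [← Ideal.natAbs_pow_inertiaDeg q, Ideal.absNorm_span_singleton,
    IsCyclotomicExtension.Rat.inertiaDeg_eq_of_not_dvd q L Q hqm] at hdvd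
  exact_mod_cast Int.natCast_dvd.mpr hdvd

variable (L)

theorem pow_succ_dvd_norm_of_dvd_norm (hq : q.Prime) (hqm : ¬ q ∣ m) {k : ℕ}
    (hk : finrank K L * k < orderOf (q : ZMod m)) {x : 𝓞 K} (h : (q : ℤ) ∣ Algebra.norm ℤ x) :
    (q : ℤ) ^ (k + 1) ∣ Algebra.norm ℤ x := by
  have hL : (q : ℤ) ∣ Algebra.norm ℤ (algebraMap (𝓞 K) (𝓞 L) x) := by
    rw [norm_int_algebraMap]
    exact dvd_pow h finrank_pos.ne'
  have hpow := prime_pow_orderOf_dvd_norm m hq hqm hL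
  rw [norm_int_algebraMap] at hpow
  exact pow_succ_dvd_of_pow_dvd_pow (Nat.prime_iff_prime_int.mp hq) hk hpow

end Inertia

/-- Bridges two `ℚ`-algebra structures on `CyclotomicField n ℚ`, which are only propositionally
equal: `CyclotomicField.isCyclotomicExtension` uses `CyclotomicField.algebra`, while instance search
finds `DivisionRing.toRatAlgebra`. -/
theorem isCyclotomicExtension_cyclotomicField_rat (n : ℕ) [NeZero n] :
    IsCyclotomicExtension {n} ℚ (CyclotomicField n ℚ) :=
  Subsingleton.elim (CyclotomicField.algebra n ℚ) DivisionRing.toRatAlgebra ▸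
    CyclotomicField.isCyclotomicExtension n ℚ

theorem orderOf_two_zmod_37 : orderOf (2 : ZMod 37) = 36 :=
  (orderOf_eq_iff (by norm_num)).mpr (by decide)

theorem orderOf_three_zmod_37 : orderOf (3 : ZMod 37) = 18 :=
  (orderOf_eq_iff (by norm_num)).mpr (by decide)

/-- The complex (totally imaginary) cyclic quartic subfield of ℚ(ζ_37)
is not norm-Euclidean. -/
theorem cyclic_quartic_conductor_37_not_normEuclidean
    {K : Type*} [Field K] [NumberField K]
    (him : IsTotallyImaginary K) (h4 : Module.finrank ℚ K = 4)
    (hsub : Nonempty (K →ₐ[ℚ] CyclotomicField 37 ℚ)) :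
    ¬ IsNormEuclidean K := by
  intro H
  let L := CyclotomicField 37 ℚ
  obtain ⟨f⟩ := hsub
  let _ : Algebra K L := f.toRingHom.toAlgebra
  have : Fact (Nat.Prime 37) := ⟨by norm_num⟩
  have : IsCyclotomicExtension {37} ℚ L := isCyclotomicExtension_cyclotomicField_rat 37
  have hKL : finrank K L = 9 := by
    have hdeg := finrank_mul_finrank ℚ K L
    rw [h4, IsCyclotomicExtension.Rat.finrank 37 L, Nat.totient_prime Fact.out] at hdeg
    lia
  obtain ⟨β, hlt, hmod⟩ := H.exists_norm_modEq_pow K L 37 4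
  have hcases : Algebra.norm ℤ β = 34 ∨ Algebra.norm ℤ β = -3 := by
    rw [h4, Int.ModEq] at hmod
    rw [abs_lt] at hlt
    lia
  have h2 : 2 ∣ Algebra.norm ℤ β → 2 ^ 2 ∣ Algebra.norm ℤ β :=
    pow_succ_dvd_norm_of_dvd_norm L 37 Nat.prime_two (by norm_num)
      (by simp [hKL, orderOf_two_zmod_37])
  have h3 : 3 ∣ Algebra.norm ℤ β → 3 ^ 2 ∣ Algebra.norm ℤ β :=
    pow_succ_dvd_norm_of_dvd_norm L 37 Nat.prime_three (by norm_num)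
      (by simp [hKL, orderOf_three_zmod_37])
  rcases hcases with h34 | hneg3
  · exact absurd (h2 (by norm_num [h34])) (by norm_num [h34])
  · exact absurd (h3 (by norm_num [hneg3])) (by norm_num [hneg3])
end

section
/- The ring of integers R of K = ℚ(√−2, √−7) is not norm-Euclidean. -/
open NumberField

/-!
Write `ω = (1 + √-7) / 2`, so that `K = ℚ(√-7)(√-2)` and the integers of `K` are
`ℤ[ω] + ℤ[ω]√-2`. The element `ξ = (ω + (1 - ω)√-2) / 2` is at distance at least `1` from all of
them. Indeed, the elements of `2ξ + 2 𝓞 K` are `u + v√-2` with `u ≡ ω` and `v ≡ 1 - ω` modulo `2`,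
and have relative norm `u² + 2v²` in `ℤ[ω]`; these congruences force the norm of `u² + 2v²` down
to `ℤ` to be at least `16`, unless `u² + 2v² = 4 - ω`. The latter has norm `14`, so `√-7` divides
it exactly once; but `√-7` divides `u² + 2v²` only if it divides both `u` and `v`, because `-2` is
not a square modulo `7`.
-/

open scoped IntermediateField

section QuadraticAlgebra

variable {R : Type*} [CommRing R] {a b : R}

theorem leftMulMatrix_quadraticBasis (z : QuadraticAlgebra R a b) :
    Algebra.leftMulMatrix (QuadraticAlgebra.basis a b) z =
      !![z.re, a * z.im; z.im, z.re + b * z.im] := by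
  ext i j
  fin_cases i <;> fin_cases j <;>
    simp [Algebra.leftMulMatrix_eq_repr_mul, QuadraticAlgebra.basis]

theorem algebraNorm_eq_quadraticNorm (z : QuadraticAlgebra R a b) :
    Algebra.norm R z = z.norm := by
  rw [Algebra.norm_eq_matrix_det (QuadraticAlgebra.basis a b), leftMulMatrix_quadraticBasis,
    Matrix.det_fin_two_of, QuadraticAlgebra.norm_def]
  ring

theorem algebraTrace_eq_quadraticTrace (z : QuadraticAlgebra R a b) :
    Algebra.trace R _ z = z.trace := by
  rw [Algebra.trace_eq_matrix_trace (QuadraticAlgebra.basis a b), leftMulMatrix_quadraticBasis,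
    Matrix.trace_fin_two_of, QuadraticAlgebra.trace_def]
  ring

end QuadraticAlgebra

section QuadraticExtension

variable {F K : Type*} [Field F] [Field K] [Algebra F K] {a b : F} {θ : K}

theorem finrank_adjoin_sqrt_s11 {m : F} {x : K} (hx : x ^ 2 = algebraMap F K m)
    (hx' : x ∉ (algebraMap F K).range) : Module.finrank F F⟮x⟯ = 2 := by
  have hroot : Polynomial.aeval x (Polynomial.X ^ 2 - Polynomial.C m) = 0 := by simp [hx]
  have hmonic := Polynomial.monic_X_pow_sub_C m two_ne_zero
  have hint : IsIntegral F x := ⟨_, hmonic, hroot⟩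
  rw [IntermediateField.adjoin.finrank hint]
  refine le_antisymm ?_ ((minpoly.two_le_natDegree_iff hint).2 hx')
  simpa using Polynomial.natDegree_le_of_dvd (minpoly.dvd F x hroot) hmonic.ne_zero

theorem quadraticLift_injective {u : {u : K // u * u = a • 1 + b • u}}
    (hu : (u : K) ∉ (algebraMap F K).range) : Function.Injective (QuadraticAlgebra.lift u) := by
  refine (injective_iff_map_eq_zero _).2 fun z hz ↦ ?_
  replace hz : algebraMap F K z.re + algebraMap F K z.im * u = 0 := by
    simpa [Algebra.smul_def] using hz
  have him : z.im = 0 := by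
    by_contra him
    refine hu ⟨-z.re / z.im, ?_⟩
    rw [map_div₀, map_neg, div_eq_iff (by simpa using him)]
    linear_combination -hz
  exact QuadraticAlgebra.ext (by simpa [him] using hz) him

variable [Algebra.IsQuadraticExtension F K]

theorem quadraticLift_bijective {u : {u : K // u * u = a • 1 + b • u}}
    (hu : (u : K) ∉ (algebraMap F K).range) : Function.Bijective (QuadraticAlgebra.lift u) := by
  have hrank : Module.finrank F (QuadraticAlgebra F a b) = Module.finrank F K := by
    rw [QuadraticAlgebra.finrank_eq_two, Algebra.IsQuadraticExtension.finrank_eq_two]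
  have hinj := quadraticLift_injective hu
  exact ⟨hinj, (LinearMap.injective_iff_surjective_of_finrank_eq_finrank
    (f := (QuadraticAlgebra.lift u).toLinearMap) hrank).1 hinj⟩

/-- The presentation `F[X] / (X² - bX - a)` of a quadratic extension of `F`, given by a root `θ`
of the polynomial lying outside `F`. -/
noncomputable def quadraticAlgebraEquiv (hθ : θ ^ 2 = algebraMap F K a + algebraMap F K b * θ)
    (hθ' : θ ∉ (algebraMap F K).range) : QuadraticAlgebra F a b ≃ₐ[F] K :=
  .ofBijective (QuadraticAlgebra.lift ⟨θ, by simpa [Algebra.smul_def, sq] using hθ⟩)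
    (quadraticLift_bijective hθ')

theorem quadraticAlgebraEquiv_apply (hθ : θ ^ 2 = algebraMap F K a + algebraMap F K b * θ)
    (hθ' : θ ∉ (algebraMap F K).range) (z : QuadraticAlgebra F a b) :
    quadraticAlgebraEquiv hθ hθ' z = algebraMap F K z.re + algebraMap F K z.im * θ := by
  simp [quadraticAlgebraEquiv, Algebra.smul_def]

theorem exists_eq_add_mul (hθ : θ ^ 2 = algebraMap F K a + algebraMap F K b * θ)
    (hθ' : θ ∉ (algebraMap F K).range) (z : K) :
    ∃ x y : F, z = algebraMap F K x + algebraMap F K y * θ := by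
  obtain ⟨w, rfl⟩ := (quadraticAlgebraEquiv hθ hθ').surjective z
  exact ⟨w.re, w.im, quadraticAlgebraEquiv_apply hθ hθ' w⟩

theorem algebraNorm_add_mul (hθ : θ ^ 2 = algebraMap F K a + algebraMap F K b * θ)
    (hθ' : θ ∉ (algebraMap F K).range) (x y : F) :
    Algebra.norm F (algebraMap F K x + algebraMap F K y * θ) =
      x ^ 2 + b * x * y - a * y ^ 2 := by
  rw [← quadraticAlgebraEquiv_apply hθ hθ' ⟨x, y⟩, Algebra.norm_eq_of_algEquiv,
    algebraNorm_eq_quadraticNorm, QuadraticAlgebra.norm_def]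
  ring

theorem algebraTrace_add_mul (hθ : θ ^ 2 = algebraMap F K a + algebraMap F K b * θ)
    (hθ' : θ ∉ (algebraMap F K).range) (x y : F) :
    Algebra.trace F K (algebraMap F K x + algebraMap F K y * θ) = 2 * x + b * y := by
  rw [← quadraticAlgebraEquiv_apply hθ hθ' ⟨x, y⟩, Algebra.trace_eq_of_algEquiv,
    algebraTrace_eq_quadraticTrace, QuadraticAlgebra.trace_def]

end QuadraticExtension

section IntegrallyClosed

variable {A F : Type*} [CommRing A] [IsIntegrallyClosed A] [Field F] [Algebra A F]
  [IsFractionRing A F]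

theorem exists_algebraMap_eq_of_mul_sq {p : A} (hp : IsRadical p) (hp0 : p ≠ 0) {e : F}
    {c : A} (he : algebraMap A F p * e ^ 2 = algebraMap A F c) : ∃ d, algebraMap A F d = e := by
  have hinj := IsFractionRing.injective A F
  obtain ⟨g, hg⟩ : ∃ g, algebraMap A F g = algebraMap A F p * e := by
    refine IsIntegrallyClosed.exists_algebraMap_eq_of_isIntegral_pow two_pos ?_
    rw [show (algebraMap A F p * e) ^ 2 = algebraMap A F (p * c) by
      rw [map_mul]; linear_combination algebraMap A F p * he]
    exact isIntegral_algebraMap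
  obtain ⟨d, rfl⟩ : p ∣ g := hp 2 g ⟨c, hinj <| by
    rw [map_pow, hg, map_mul]; linear_combination algebraMap A F p * he⟩
  refine ⟨d, mul_left_cancel₀ (by simpa using hp0 : algebraMap A F p ≠ 0) ?_⟩
  rw [← hg, map_mul]

theorem sq_ne_algebraMap_of_isRadical {m : A} (hm : IsRadical m) (hm0 : m ≠ 0)
    (hmu : ¬ IsUnit m) {x : F} : x ^ 2 ≠ algebraMap A F m := by
  intro hx
  have := (IsFractionRing.injective A F).isDomain
  obtain ⟨c, rfl⟩ : ∃ c, algebraMap A F c = x :=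
    IsIntegrallyClosed.exists_algebraMap_eq_of_isIntegral_pow two_pos (hx ▸ isIntegral_algebraMap)
  have hc : c ^ 2 = m := IsFractionRing.injective A F (by rw [map_pow, hx])
  have hcu : IsUnit c := hm.squarefree hm0 c ⟨1, by rw [← hc]; ring⟩
  exact hmu (hc ▸ hcu.pow 2)

variable {K : Type*} [Field K] [Algebra F K] [Algebra A K] [IsScalarTower A F K]
  [Algebra.IsQuadraticExtension F K] {θ : K}

theorem exists_eq_add_mul_of_isIntegral {a b : A}
    (hθ : θ ^ 2 = algebraMap A K a + algebraMap A K b * θ) (hθ' : θ ∉ (algebraMap F K).range)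
    {z : K} (hz : IsIntegral A z) :
    ∃ (x y : F) (t n : A), z = algebraMap F K x + algebraMap F K y * θ ∧
      algebraMap A F t = 2 * x + algebraMap A F b * y ∧
      algebraMap A F n = x ^ 2 + algebraMap A F b * x * y - algebraMap A F a * y ^ 2 := by
  simp only [IsScalarTower.algebraMap_apply A F K] at hθ
  obtain ⟨x, y, rfl⟩ := exists_eq_add_mul hθ hθ' z
  obtain ⟨t, ht⟩ := IsIntegrallyClosed.isIntegral_iff.1 (Algebra.isIntegral_trace (L := F) hz)
  obtain ⟨n, hn⟩ := IsIntegrallyClosed.isIntegral_iff.1 (Algebra.isIntegral_norm F hz)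
  exact ⟨x, y, t, n, rfl, by rw [ht, algebraTrace_add_mul hθ hθ'],
    by rw [hn, algebraNorm_add_mul hθ hθ']⟩

theorem exists_eq_add_mul_of_isRadical_discr {a b : A}
    (hθ : θ ^ 2 = algebraMap A K a + algebraMap A K b * θ) (hθ' : θ ∉ (algebraMap F K).range)
    (hD : IsRadical (b ^ 2 + 4 * a)) (hD0 : b ^ 2 + 4 * a ≠ 0) {z : K} (hz : IsIntegral A z) :
    ∃ c d : A, z = algebraMap A K c + algebraMap A K d * θ := by
  obtain ⟨x, y, t, n, rfl, ht, hn⟩ := exists_eq_add_mul_of_isIntegral hθ hθ' hz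
  obtain ⟨d, rfl⟩ : ∃ d, algebraMap A F d = y :=
    exists_algebraMap_eq_of_mul_sq hD hD0 (c := t ^ 2 - 4 * n) (by
      simp only [map_add, map_sub, map_mul, map_pow, map_ofNat, ht, hn]; ring)
  have hθint : IsIntegral A θ := ⟨.X ^ 2 - (.C b * .X + .C a), by monicity!, by simp [hθ]; ring⟩
  have hx : IsIntegral A x := by
    rw [← isIntegral_algebraMap_iff (algebraMap F K).injective]
    simpa only [← IsScalarTower.algebraMap_apply, add_sub_cancel_right] using
      hz.sub ((isIntegral_algebraMap (x := d)).mul hθint)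
  obtain ⟨c, rfl⟩ := IsIntegrallyClosed.isIntegral_iff.1 hx
  exact ⟨c, d, by simp only [← IsScalarTower.algebraMap_apply]⟩

theorem exists_eq_add_mul_sqrt_of_isIntegral {m : A} (hm : IsRadical m) (hm0 : m ≠ 0)
    (hm2 : Associated m 2) (hθ : θ ^ 2 = algebraMap A K m) (hθ' : θ ∉ (algebraMap F K).range)
    {z : K} (hz : IsIntegral A z) : ∃ c d : A, z = algebraMap A K c + algebraMap A K d * θ := by
  obtain ⟨x, y, t, n, rfl, ht, hn⟩ :=
    exists_eq_add_mul_of_isIntegral (a := m) (b := 0) (by simpa using hθ) hθ' hz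
  simp only [map_zero, zero_mul, add_zero] at ht hn
  obtain ⟨s, hs⟩ : ∃ s, algebraMap A F s = 2 * y :=
    exists_algebraMap_eq_of_mul_sq hm hm0 (c := t ^ 2 - 4 * n) (by
      simp only [map_sub, map_mul, map_pow, map_ofNat, ht, hn]; ring)
  have hst : t ^ 2 = m * s ^ 2 + 4 * n := IsFractionRing.injective A F (by
    simp only [map_add, map_mul, map_pow, map_ofNat, ht, hn, hs]; ring)
  have hmt : m ∣ t := hm 2 t (hst ▸ dvd_add (dvd_mul_right _ _)
    ((hm2.dvd.trans ⟨2, by norm_num⟩).mul_right n))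
  obtain ⟨c, rfl⟩ := hm2.symm.dvd.trans hmt
  have h2 : (2 : F) ≠ 0 := by
    rw [← map_ofNat (algebraMap A F)]
    exact (map_ne_zero_iff _ (IsFractionRing.injective A F)).2 fun h ↦ hm0 (hm2.eq_zero_iff.2 h)
  obtain rfl : algebraMap A F c = x := mul_left_cancel₀ h2 (by rw [← ht, map_mul, map_ofNat])
  obtain ⟨d, rfl⟩ : ∃ d, algebraMap A F d = y :=
    exists_algebraMap_eq_of_mul_sq hm hm0 (c := c ^ 2 - n) (by
      simp only [map_sub, map_pow, hn]; ring)
  exact ⟨c, d, by simp only [← IsScalarTower.algebraMap_apply]⟩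

end IntegrallyClosed

theorem not_isUnit_neg_two_ringOfIntegers (F : Type*) [Field F] [CharZero F] :
    ¬ IsUnit (-2 : 𝓞 F) := by
  have := Algebra.IsIntegral.isLocalHom ℤ (𝓞 F)
  intro h
  have h2 : IsUnit (-2 : ℤ) := isUnit_of_map_unit (algebraMap ℤ (𝓞 F)) _ (by simpa using h)
  exact absurd h2 (by decide)

/-- The ring of Kleinian integers `ℤ[ω]`, where `ω = (1 + √-7) / 2` satisfies `ω² = -2 + ω`. -/
abbrev KleinianInt : Type := QuadraticAlgebra ℤ (-2) 1

namespace KleinianInt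

open scoped QuadraticAlgebra

theorem two_dvd_sq_sub_self (z : KleinianInt) : 2 ∣ z ^ 2 - z := by
  obtain ⟨p, q⟩ := z
  obtain ⟨k, hk⟩ := (Int.even_mul_pred_self p).two_dvd
  obtain ⟨l, hl⟩ := (Int.even_mul_pred_self q).two_dvd
  refine ⟨⟨k - q ^ 2, p * q + l⟩, QuadraticAlgebra.ext ?_ ?_⟩ <;>
    simp only [sq, QuadraticAlgebra.mk_mul_mk, QuadraticAlgebra.mk_sub_mk, QuadraticAlgebra.re_mul,
      QuadraticAlgebra.im_mul, QuadraticAlgebra.re_ofNat, QuadraticAlgebra.im_ofNat]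
  · linear_combination hk
  · linear_combination hl

/-- Reduction modulo the ramified prime `(√-7)`, under which `ω` becomes the double root `4` of
`X² - X + 2`. -/
def modSqrtNegSeven : KleinianInt →ₐ[ℤ] ZMod 7 :=
  QuadraticAlgebra.lift ⟨4, by decide⟩

theorem seven_dvd_sq_of_modSqrtNegSeven_eq_zero {z : KleinianInt} (hz : modSqrtNegSeven z = 0) :
    7 ∣ z ^ 2 := by
  obtain ⟨p, q⟩ := z
  have hpq : ((p + q * 4 : ℤ) : ZMod 7) = 0 := by
    simpa [modSqrtNegSeven] using hz
  obtain ⟨k, hk⟩ := (ZMod.intCast_zmod_eq_zero_iff_dvd _ 7).1 hpq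
  obtain rfl : p = 7 * k - 4 * q := by push_cast at hk; linarith
  refine ⟨⟨7 * k ^ 2 - 8 * k * q + 2 * q ^ 2, 2 * k * q - q ^ 2⟩, QuadraticAlgebra.ext ?_ ?_⟩ <;>
    simp only [sq, QuadraticAlgebra.mk_mul_mk, QuadraticAlgebra.re_mul, QuadraticAlgebra.im_mul,
      QuadraticAlgebra.re_ofNat, QuadraticAlgebra.im_ofNat] <;>
    ring

theorem seven_dvd_of_modSqrtNegSeven_sq_add_two_mul_sq_eq_zero {u v : KleinianInt}
    (h : modSqrtNegSeven (u ^ 2 + 2 * v ^ 2) = 0) : 7 ∣ u ^ 2 + 2 * v ^ 2 := by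
  have anisotropic : ∀ s t : ZMod 7, s ^ 2 + 2 * t ^ 2 = 0 → s = 0 ∧ t = 0 := by decide
  obtain ⟨hu, hv⟩ := anisotropic _ _ (by simpa [map_ofNat] using h)
  exact dvd_add (seven_dvd_sq_of_modSqrtNegSeven_eq_zero hu)
    ((seven_dvd_sq_of_modSqrtNegSeven_eq_zero hv).mul_left 2)

theorem sq_add_two_mul_sq_ne (u v : KleinianInt) : u ^ 2 + 2 * v ^ 2 ≠ 4 - ω := by
  intro h
  have hred : modSqrtNegSeven (4 - ω) = 0 := by simp [modSqrtNegSeven]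
  obtain ⟨w, hw⟩ := h ▸ seven_dvd_of_modSqrtNegSeven_sq_add_two_mul_sq_eq_zero (h ▸ hred)
  have him := congrArg QuadraticAlgebra.im hw
  simp only [QuadraticAlgebra.im_sub, QuadraticAlgebra.im_ofNat, QuadraticAlgebra.omega_im,
    QuadraticAlgebra.re_ofNat, QuadraticAlgebra.im_mul] at him
  omega

theorem eq_four_sub_omega_of_norm_lt {z : KleinianInt} (hre : 4 ∣ z.re)
    (hsum : 8 ∣ z.re + z.im - 3) (hz : z.norm < 16) : z = 4 - ω := by
  obtain ⟨x, y⟩ := z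
  simp only [QuadraticAlgebra.norm_def] at hre hsum hz
  have hx : -4 ≤ x ∧ x ≤ 4 := by constructor <;> nlinarith [sq_nonneg (x + 4 * y)]
  have hy : -3 ≤ y ∧ y ≤ 3 := by constructor <;> nlinarith [sq_nonneg (2 * x + y)]
  obtain ⟨rfl, rfl⟩ : x = 4 ∧ y = -1 := by
    obtain ⟨m, rfl⟩ := hre
    have hm : -1 ≤ m ∧ m ≤ 1 := by omega
    obtain ⟨hy1, hy2⟩ := hy
    obtain ⟨hm1, hm2⟩ := hm
    interval_cases m <;> interval_cases y <;> omega
  ext <;> simp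

theorem four_dvd_re_and_eight_dvd_re_add_im_sub_three (c d : KleinianInt) :
    4 ∣ ((ω - 2 * c) ^ 2 + 2 * (1 - ω - 2 * d) ^ 2).re ∧
      8 ∣ ((ω - 2 * c) ^ 2 + 2 * (1 - ω - 2 * d) ^ 2).re +
        ((ω - 2 * c) ^ 2 + 2 * (1 - ω - 2 * d) ^ 2).im - 3 := by
  obtain ⟨p, q⟩ := c
  obtain ⟨r, s⟩ := d
  obtain ⟨k, hk⟩ := (Int.even_mul_pred_self p).two_dvd
  obtain ⟨l, hl⟩ := (Int.even_mul_pred_self q).two_dvd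
  simp only [sq, QuadraticAlgebra.re_add, QuadraticAlgebra.im_add, QuadraticAlgebra.re_sub,
    QuadraticAlgebra.im_sub, QuadraticAlgebra.re_mul, QuadraticAlgebra.im_mul,
    QuadraticAlgebra.omega_re, QuadraticAlgebra.omega_im, QuadraticAlgebra.re_one,
    QuadraticAlgebra.im_one, QuadraticAlgebra.re_ofNat, QuadraticAlgebra.im_ofNat]
  constructor
  · refine ⟨p ^ 2 + 2 * q - 2 * q ^ 2 - 2 * r + 2 * r ^ 2 - 1 - 4 * s - 4 * s ^ 2, ?_⟩
    ring
  · refine ⟨k - l + p * q + r ^ 2 - 2 * s - s ^ 2 + 2 * r * s - 1, ?_⟩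
    linear_combination 4 * hk - 4 * hl

theorem sixteen_le_norm (c d : KleinianInt) :
    16 ≤ ((ω - 2 * c) ^ 2 + 2 * (1 - ω - 2 * d) ^ 2).norm := by
  by_contra! hlt
  obtain ⟨hre, hsum⟩ := four_dvd_re_and_eight_dvd_re_add_im_sub_three c d
  exact sq_add_two_mul_sq_ne _ _ (eq_four_sub_omega_of_norm_lt hre hsum hlt)

theorem nonempty_ringHom_ringOfIntegers {F : Type*} [Field F] [CharZero F] {b : F}
    (hb : b ^ 2 = -7) : Nonempty (KleinianInt →+* 𝓞 F) := by
  have hroot : ((1 + b) / 2) ^ 2 = -2 + (1 + b) / 2 := by linear_combination hb / 4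
  have hint : IsIntegral ℤ ((1 + b) / 2) :=
    ⟨.X ^ 2 - .X + .C 2, by monicity!, by simp [hroot]⟩
  obtain ⟨θ, hθ⟩ : ∃ θ : 𝓞 F, (θ : F) = (1 + b) / 2 := ⟨⟨_, hint⟩, rfl⟩
  rw [← hθ] at hroot
  have hθ_sq : θ ^ 2 = -2 + θ := RingOfIntegers.ext (by simpa [map_ofNat] using hroot)
  exact ⟨(QuadraticAlgebra.lift (R := ℤ) ⟨θ, by simp [← sq, hθ_sq]⟩).toRingHom⟩

section RingOfIntegers

variable {F : Type*} [Field F] (f : KleinianInt →+* 𝓞 F)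

theorem map_omega_sq : (f ω : F) ^ 2 = -2 + f ω := by
  have h : (ω : KleinianInt) ^ 2 = -2 + ω := by ext <;> simp [sq]
  simpa [map_ofNat] using congrArg (fun z ↦ (f z : F)) h

variable [CharZero F]

theorem map_eq_add_mul (z : KleinianInt) :
    (f z : F) = algebraMap ℚ F z.re + algebraMap ℚ F z.im * f ω := by
  have h : z = (z.re : KleinianInt) + (z.im : KleinianInt) * ω := by ext <;> simp
  conv_lhs => rw [h]
  simp

theorem map_omega_notMem_range : (f ω : F) ∉ (algebraMap ℚ F).range := by
  rintro ⟨r, hr⟩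
  have hr' : r ^ 2 = -2 + r := (algebraMap ℚ F).injective (by
    rw [map_pow, hr, map_omega_sq, map_add, hr, map_neg, map_ofNat])
  linarith [sq_nonneg (2 * r - 1)]

variable [Algebra.IsQuadraticExtension ℚ F]

theorem algebraNorm_map (z : KleinianInt) : Algebra.norm ℚ (f z : F) = z.norm := by
  rw [map_eq_add_mul, algebraNorm_add_mul (a := -2) (b := 1) (by simpa using map_omega_sq f)
    (map_omega_notMem_range f), QuadraticAlgebra.norm_def]
  push_cast
  ring

theorem surjective_ringOfIntegers : Function.Surjective f := by
  intro x
  have hdiscr : IsRadical (1 ^ 2 + 4 * -2 : ℤ) :=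
    Prime.isRadical (Int.prime_iff_natAbs_prime.2 (by norm_num))
  obtain ⟨c, d, hcd⟩ := exists_eq_add_mul_of_isRadical_discr (a := -2) (b := 1)
    (by simpa using map_omega_sq f) (map_omega_notMem_range f) hdiscr (by norm_num)
    x.isIntegral_coe
  exact ⟨⟨c, d⟩, RingOfIntegers.ext <| (map_eq_add_mul f _).trans (by simpa using hcd.symm)⟩

include f

theorem isRadical_neg_two_ringOfIntegers : IsRadical (-2 : 𝓞 F) := by
  refine (isRadical_iff_pow_one_lt 2 one_lt_two).2 fun x hx ↦ neg_dvd.2 ?_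
  obtain ⟨z, rfl⟩ := surjective_ringOfIntegers f x
  have hz : 2 ∣ f z ^ 2 - f z := by simpa [map_ofNat] using map_dvd f (two_dvd_sq_sub_self z)
  exact (dvd_sub_right (neg_dvd.1 hx)).1 hz

end RingOfIntegers

section Tower

variable {F K : Type*} [Field F] [NumberField F] [Algebra.IsQuadraticExtension ℚ F]
  [Field K] [Algebra F K] (f : KleinianInt →+* 𝓞 F) {a : K}

include f

theorem sqrt_neg_two_notMem_range (ha : a ^ 2 = -2) : a ∉ (algebraMap F K).range := by
  rintro ⟨x, rfl⟩
  refine sq_ne_algebraMap_of_isRadical (F := F) (x := x) (isRadical_neg_two_ringOfIntegers f)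
    (by simp) (not_isUnit_neg_two_ringOfIntegers F) ?_
  exact (algebraMap F K).injective (by simpa [map_ofNat] using ha)

variable [Algebra.IsQuadraticExtension F K]

theorem exists_ringOfIntegers_eq (ha : a ^ 2 = -2) (η : 𝓞 K) :
    ∃ c d : KleinianInt, (η : K) = algebraMap F K (f c) + algebraMap F K (f d) * a := by
  obtain ⟨c', d', h⟩ := exists_eq_add_mul_sqrt_of_isIntegral (F := F)
    (isRadical_neg_two_ringOfIntegers f) (by simp) (.neg_left .rfl) (by simpa [map_ofNat] using ha)
    (sqrt_neg_two_notMem_range f ha) (η.isIntegral_coe.tower_top (A := 𝓞 F))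
  obtain ⟨c, rfl⟩ := surjective_ringOfIntegers f c'
  obtain ⟨d, rfl⟩ := surjective_ringOfIntegers f d'
  exact ⟨c, d, h⟩

theorem algebraNorm_half_add_mul [CharZero K] (ha : a ^ 2 = -2) (u v : KleinianInt) :
    Algebra.norm ℚ ((algebraMap F K (f u) + algebraMap F K (f v) * a) / 2) =
      (u ^ 2 + 2 * v ^ 2).norm / 16 := by
  have hrel : Algebra.norm F ((algebraMap F K (f u) + algebraMap F K (f v) * a) / 2) =
      f (u ^ 2 + 2 * v ^ 2) * algebraMap ℚ F (1 / 4) := by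
    rw [show (algebraMap F K (f u) + algebraMap F K (f v) * a) / 2 =
        algebraMap F K (f u / 2) + algebraMap F K (f v / 2) * a by
      simp only [map_div₀, map_ofNat]; ring,
      algebraNorm_add_mul (a := -2) (b := 0) (by simpa [map_ofNat] using ha)
        (sqrt_neg_two_notMem_range f ha)]
    simp only [zero_mul, add_zero, neg_mul, sub_neg_eq_add, map_add, map_pow, map_mul, map_ofNat,
      one_div, map_inv₀]
    ring
  rw [← Algebra.norm_norm (S := F), hrel, map_mul, algebraNorm_map, Algebra.norm_algebraMap,
    Algebra.IsQuadraticExtension.finrank_eq_two]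
  ring

end Tower

end KleinianInt

open scoped QuadraticAlgebra in
theorem not_isNormEuclidean_of_tower {F K : Type*} [Field F] [NumberField F] [Field K]
    [NumberField K] [Algebra F K] [Algebra.IsQuadraticExtension ℚ F]
    [Algebra.IsQuadraticExtension F K] {a : K} {b : F} (ha : a ^ 2 = -2) (hb : b ^ 2 = -7) :
    ¬ IsNormEuclidean K := by
  obtain ⟨f⟩ := KleinianInt.nonempty_ringHom_ringOfIntegers hb
  intro h
  obtain ⟨η, hη⟩ := h ((algebraMap F K (f ω) + algebraMap F K (f (1 - ω)) * a) / 2)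
  obtain ⟨c, d, hcd⟩ := KleinianInt.exists_ringOfIntegers_eq f ha η
  have hdiff : (algebraMap F K (f ω) + algebraMap F K (f (1 - ω)) * a) / 2 - η =
      (algebraMap F K (f (ω - 2 * c)) + algebraMap F K (f (1 - ω - 2 * d)) * a) / 2 := by
    rw [hcd]
    simp only [map_sub, map_one, map_mul, map_ofNat]
    ring
  rw [hdiff, KleinianInt.algebraNorm_half_add_mul f ha] at hη
  have hnorm : (16 : ℚ) ≤ ((ω - 2 * c) ^ 2 + 2 * (1 - ω - 2 * d) ^ 2 : KleinianInt).norm :=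
    mod_cast KleinianInt.sixteen_le_norm c d
  linarith [(abs_lt.1 hη).2]

/-- The field `K = ℚ(√-2, √-7)` is not norm-Euclidean. -/
theorem sqrt_neg2_sqrt_neg7_not_normEuclidean
    {K : Type*} [Field K] [NumberField K]
    (a b : K) (ha : a ^ 2 = -2) (hb : b ^ 2 = -7)
    (h4 : Module.finrank ℚ K = 4) :
    ¬ IsNormEuclidean K := by
  have hb_notMem : b ∉ (algebraMap ℚ K).range := by
    rintro ⟨r, rfl⟩
    have hr : r ^ 2 = -7 := (algebraMap ℚ K).injective (by simpa [map_ofNat] using hb)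
    linarith [sq_nonneg r]
  have hF : Module.finrank ℚ ℚ⟮b⟯ = 2 :=
    finrank_adjoin_sqrt_s11 (m := -7) (by simpa [map_ofNat] using hb) hb_notMem
  have hK : Module.finrank ℚ⟮b⟯ K = 2 := by
    have hmul := Module.finrank_mul_finrank ℚ ℚ⟮b⟯ K
    rw [hF, h4] at hmul
    lia
  have : Algebra.IsQuadraticExtension ℚ ℚ⟮b⟯ := ⟨hF⟩
  have : Algebra.IsQuadraticExtension ℚ⟮b⟯ K := ⟨hK⟩
  have hgen : IntermediateField.AdjoinSimple.gen ℚ b ^ 2 = -7 := Subtype.ext hb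
  exact not_isNormEuclidean_of_tower ha hgen
end

section
/- Let m < 0 and n < 0 be such that 2 is unramified in K = ℚ(√m, √n). If the ring of integers of K is norm-Euclidean, then |m| < 64 and |n| < 64. -/
open NumberField

/-!
Let `k = ℚ(√m)`. At a prime `Q` above `2`, `√m ≡ m` modulo `Q`, and squaring this shows that
`m ≡ 2, 3 (mod 4)` would put `2` in `Q ^ 2`; so unramifiedness forces `m ≡ 1 (mod 4)` and
`α = (1 + √m) / 2` is an integer of `k`. Norm-Euclidean division of `α` by `2` in `K` leaves a
remainder `α - 2η` of absolute norm below `16`. Its relative norm to the quadratic subfield `k` is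
`α ^ 2 - 2 α Tr η + 4 N η`, an element of `α ^ 2 + 2 𝓞 k`. The coordinate of such an element along
`√m` is half an odd integer, so its norm is at least `|m| / 4`, whence `|m| < 64`.
-/

section UnramifiedTwo

variable {R : Type*} [CommRing R]

theorem emod_four_of_sq_eq_intCast {Q : Ideal R} (hQ : Q.IsRadical) (h2 : (2 : R) ∈ Q)
    (h2' : (2 : R) ∉ Q ^ 2) {s : R} {m : ℤ} (hs : s ^ 2 = m) : m % 4 = 0 ∨ m % 4 = 1 := by
  have h4 : (4 : R) ∈ Q ^ 2 := by
    convert Ideal.pow_mem_pow h2 2 using 1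
    norm_num
  have even_mem {c : ℤ} (hc : Even c) : (c : R) ∈ Q := by
    obtain ⟨d, rfl⟩ := hc
    have : ((d + d : ℤ) : R) = d * 2 := by push_cast; ring
    exact this ▸ Q.mul_mem_left _ h2
  -- Since `m ^ 2 ≡ m` modulo `2`, the square root `s` of `m` is congruent to `m` modulo `Q`.
  have hsm : s - m ∈ Q := by
    apply hQ
    refine ⟨2, ?_⟩
    have : (s - m) ^ 2 = ((m * (m + 1) : ℤ) : R) - m * s * 2 := by
      push_cast
      linear_combination hs
    exact this ▸ Q.sub_mem (even_mem (Int.even_mul_succ_self m)) (Q.mul_mem_left _ h2)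
  have hmm : ((m - m ^ 2 : ℤ) : R) ∈ Q ^ 2 := by
    have : ((m - m ^ 2 : ℤ) : R) = (s - m) ^ 2 + m * (2 * (s - m)) := by
      push_cast
      linear_combination -hs
    rw [this]
    exact add_mem (Ideal.pow_mem_pow hsm 2)
      (Ideal.mul_mem_left _ _ (pow_two Q ▸ Ideal.mul_mem_mul h2 hsm))
  by_contra! hm
  obtain ⟨c, hc⟩ : ∃ c, m - m ^ 2 = 4 * c + 2 := by
    refine ⟨(m - m ^ 2) / 4, ?_⟩
    have : m % 4 = 2 ∨ m % 4 = 3 := by omega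
    have : (m - m ^ 2) % 4 = 2 := by
      rcases this with h | h <;> simp [Int.sub_emod, pow_two, Int.mul_emod, h]
    omega
  apply h2'
  have : (2 : R) = ((m - m ^ 2 : ℤ) : R) - c * 4 := by rw [hc]; push_cast; ring
  exact this ▸ sub_mem hmm (Ideal.mul_mem_left _ _ h4)

theorem emod_four_eq_one_of_unramified_two [IsDedekindDomain R] [CharZero R]
    [Algebra.IsIntegral ℤ R] {F : Type*} [Field F] [Algebra R F] [IsFractionRing R F]
    (hunram : ∀ P : Ideal R, P.IsPrime → ¬ P ^ 2 ∣ Ideal.span {(2 : R)})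
    {m : ℤ} (hm : Squarefree m) {s : F} (hs : s ^ 2 = m) : m % 4 = 1 := by
  obtain ⟨t, rfl⟩ : ∃ t : R, algebraMap R F t = s :=
    IsIntegrallyClosed.exists_algebraMap_eq_of_isIntegral_pow two_pos
      (by rw [hs]; exact isIntegral_intCast m)
  have ht : t ^ 2 = m := IsFractionRing.injective R F (by simpa using hs)
  have : (Ideal.span {(2 : ℤ)}).IsPrime :=
    (Ideal.span_singleton_prime two_ne_zero).2 Int.prime_two
  obtain ⟨⟨Q, hQ, hQ2⟩⟩ := Ideal.nonempty_primesOver (S := R) (Ideal.span {(2 : ℤ)})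
  have h2 : (2 : R) ∈ Q := by
    have h := (Ideal.mem_of_liesOver Q (Ideal.span {(2 : ℤ)}) 2).1 (Ideal.mem_span_singleton_self 2)
    simpa using h
  have h2' : (2 : R) ∉ Q ^ 2 := fun h ↦
    hunram Q hQ (Ideal.dvd_iff_le.2 ((Ideal.span_singleton_le_iff_mem _).2 h))
  refine (emod_four_of_sq_eq_intCast hQ.isRadical h2 h2' ht).resolve_left fun h ↦ ?_
  exact Int.prime_two.not_isUnit (hm 2 (Int.dvd_of_emod_eq_zero h))

end UnramifiedTwo

theorem isInteger_of_squarefree_mul_sq {R F : Type*} [CommRing R] [IsDomain R]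
    [UniqueFactorizationMonoid R] [Field F] [Algebra R F] [IsFractionRing R F] {m : R}
    (hm : Squarefree m) {r : F} (h : IsLocalization.IsInteger R (algebraMap R F m * r ^ 2)) :
    IsLocalization.IsInteger R r := by
  obtain ⟨c, hc⟩ := h
  have hnum : m * IsFractionRing.num R r ^ 2 = c * (IsFractionRing.den R r : R) ^ 2 := by
    apply IsFractionRing.injective R F
    rw [map_mul, map_mul, map_pow, map_pow, hc, ← IsFractionRing.num_mul_den_eq_num_iff_eq.2 rfl]
    ring
  have hden : (IsFractionRing.den R r : R) ^ 2 ∣ m :=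
    (IsFractionRing.num_den_reduced R r).symm.pow.dvd_of_dvd_mul_right ⟨c, by rw [hnum, mul_comm]⟩
  exact IsFractionRing.isInteger_of_isUnit_den (hm _ (pow_two (IsFractionRing.den R r : R) ▸ hden))

theorem algebraMap_ne_of_sq_eq {F L : Type*} [Field F] [CommRing L] [Nontrivial L] [Algebra F L]
    {a : F} {s : L} (ha : ¬ IsSquare a) (hs : s ^ 2 = algebraMap F L a) (r : F) :
    algebraMap F L r ≠ s := by
  rintro rfl
  rw [← map_pow] at hs
  exact ha ⟨r, by rw [← (algebraMap F L).injective hs, pow_two]⟩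

open IntermediateField Polynomial in
theorem isQuadraticExtension_adjoin_sqrt {F L : Type*} [Field F] [Field L] [Algebra F L] {a : F}
    {s : L} (ha : ¬ IsSquare a) (hs : s ^ 2 = algebraMap F L a) :
    Algebra.IsQuadraticExtension F F⟮s⟯ := by
  have hirr : Irreducible (X ^ 2 - C a) :=
    X_pow_sub_C_irreducible_of_prime Nat.prime_two fun b hb ↦ ha ⟨b, by rw [← hb, pow_two]⟩
  have hmonic : (X ^ 2 - C a).Monic := monic_X_pow_sub_C a two_ne_zero
  have hroot : aeval s (X ^ 2 - C a) = 0 := by simp [hs]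
  refine ⟨?_⟩
  rw [adjoin.finrank ⟨_, hmonic, hroot⟩, ← minpoly.eq_of_irreducible_of_monic hirr hroot hmonic,
    natDegree_X_pow_sub_C]

section IsQuadraticExtension

open Polynomial

variable {R S : Type*} [CommRing R] [Nontrivial R] [CommRing S] [Algebra R S]
  [Algebra.IsQuadraticExtension R S]

theorem charpoly_lmul_of_isQuadraticExtension (x : S) :
    (Algebra.lmul R S x).charpoly =
      X ^ 2 - C (Algebra.trace R S x) * X + C (Algebra.norm R x) := by
  let b := Module.finBasisOfFinrankEq R S (Algebra.IsQuadraticExtension.finrank_eq_two R S)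
  rw [← LinearMap.charpoly_toMatrix _ b, Matrix.charpoly_fin_two, Algebra.norm_eq_matrix_det b,
    Algebra.trace_eq_matrix_trace b]
  rfl

theorem norm_algebraMap_sub (a : R) (x : S) :
    Algebra.norm R (algebraMap R S a - x) =
      a ^ 2 - Algebra.trace R S x * a + Algebra.norm R x := by
  rw [Algebra.norm_apply, map_sub, AlgHom.commutes, ← LinearMap.eval_charpoly,
    charpoly_lmul_of_isQuadraticExtension]
  simp

theorem norm_algebraMap_sub_mul (a c : R) (x : S) :
    Algebra.norm R (algebraMap R S a - algebraMap R S c * x) =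
      a ^ 2 - c * Algebra.trace R S x * a + c ^ 2 * Algebra.norm R x := by
  rw [norm_algebraMap_sub, map_mul (Algebra.norm R), Algebra.norm_algebraMap,
    Algebra.IsQuadraticExtension.finrank_eq_two, ← Algebra.smul_def, map_smul, smul_eq_mul]

theorem sq_sub_trace_mul_add_norm (x : S) :
    x ^ 2 - algebraMap R S (Algebra.trace R S x) * x + algebraMap R S (Algebra.norm R x) = 0 := by
  have h := LinearMap.aeval_self_charpoly (Algebra.lmul R S x)
  rw [aeval_algHom_apply, map_eq_zero_iff _ Algebra.lmul_injective,
    charpoly_lmul_of_isQuadraticExtension] at h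
  simpa using h

variable {F L : Type*} [Field F] [Field L] [Algebra F L] [Algebra.IsQuadraticExtension F L]
  {a : F} {s : L}

theorem trace_eq_zero_of_sq_eq (ha : ¬ IsSquare a) (hs : s ^ 2 = algebraMap F L a) :
    Algebra.trace F L s = 0 := by
  by_contra ht
  refine algebraMap_ne_of_sq_eq ha hs ((a + Algebra.norm F s) / Algebra.trace F L s) ?_
  have ht' : algebraMap F L (Algebra.trace F L s) ≠ 0 := by simpa using ht
  rw [map_div₀, map_add, div_eq_iff ht']
  linear_combination sq_sub_trace_mul_add_norm (R := F) s - hs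

theorem norm_eq_neg_of_sq_eq (ha : ¬ IsSquare a) (hs : s ^ 2 = algebraMap F L a) :
    Algebra.norm F s = -a := by
  apply (algebraMap F L).injective
  have h := sq_sub_trace_mul_add_norm (R := F) s
  rw [trace_eq_zero_of_sq_eq ha hs, map_zero] at h
  rw [map_neg]
  linear_combination h - hs

theorem trace_add_mul_sqrt (ha : ¬ IsSquare a) (hs : s ^ 2 = algebraMap F L a) (x y : F) :
    Algebra.trace F L (algebraMap F L x + algebraMap F L y * s) = 2 * x := by
  rw [map_add, ← Algebra.smul_def, map_smul, trace_eq_zero_of_sq_eq ha hs, smul_zero, add_zero,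
    Algebra.trace_algebraMap, Algebra.IsQuadraticExtension.finrank_eq_two, nsmul_eq_mul,
    Nat.cast_ofNat]

theorem norm_add_mul_sqrt_s17 (ha : ¬ IsSquare a) (hs : s ^ 2 = algebraMap F L a) (x y : F) :
    Algebra.norm F (algebraMap F L x + algebraMap F L y * s) = x ^ 2 - a * y ^ 2 := by
  rw [← sub_neg_eq_add, ← neg_mul, ← map_neg, norm_algebraMap_sub_mul,
    trace_eq_zero_of_sq_eq ha hs, norm_eq_neg_of_sq_eq ha hs]
  ring

theorem exists_eq_add_mul_sqrt_s17 (ha : ¬ IsSquare a) (hs : s ^ 2 = algebraMap F L a) (z : L) :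
    ∃ x y : F, z = algebraMap F L x + algebraMap F L y * s := by
  have hli : LinearIndependent F ![1, s] := by
    rw [LinearIndependent.pair_iff' one_ne_zero]
    simpa [Algebra.smul_def] using algebraMap_ne_of_sq_eq ha hs
  have hspan := hli.span_eq_top_of_card_eq_finrank
    (by simp [Algebra.IsQuadraticExtension.finrank_eq_two])
  have hz : z ∈ Submodule.span F (Set.range ![1, s]) := hspan ▸ Submodule.mem_top
  rw [Matrix.range_cons_cons_empty, Submodule.mem_span_pair] at hz
  obtain ⟨x, y, rfl⟩ := hz
  exact ⟨x, y, by simp [Algebra.smul_def]⟩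

end IsQuadraticExtension

theorem isInteger_two_mul_of_isIntegral_add_mul_sqrt {R F L : Type*} [CommRing R] [IsDomain R]
    [UniqueFactorizationMonoid R] [Field F] [Algebra R F] [IsFractionRing R F] [Field L]
    [Algebra F L] [Algebra R L] [IsScalarTower R F L] [Algebra.IsQuadraticExtension F L] {m : R}
    (hm : Squarefree m) (hm' : ¬ IsSquare (algebraMap R F m)) {s : L}
    (hs : s ^ 2 = algebraMap F L (algebraMap R F m)) {x y : F}
    (h : IsIntegral R (algebraMap F L x + algebraMap F L y * s)) :
    IsLocalization.IsInteger R (2 * y) := by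
  obtain ⟨t, ht⟩ := IsIntegrallyClosed.isIntegral_iff.1 (Algebra.isIntegral_trace (L := F) h)
  obtain ⟨n, hn⟩ := IsIntegrallyClosed.isIntegral_iff.1 (Algebra.isIntegral_norm F h)
  rw [trace_add_mul_sqrt hm' hs] at ht
  rw [norm_add_mul_sqrt_s17 hm' hs] at hn
  refine isInteger_of_squarefree_mul_sq hm ⟨t ^ 2 - 4 * n, ?_⟩
  rw [map_sub, map_mul, map_pow, ht, hn, map_ofNat]
  ring

open Polynomial in
theorem isIntegral_one_add_sqrt_div_two {F : Type*} [Field F] [NeZero (2 : F)] {m : ℤ}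
    (hm : m % 4 = 1) {s : F} (hs : s ^ 2 = m) : IsIntegral ℤ ((1 + s) / 2) := by
  obtain ⟨c, rfl⟩ : ∃ c, m = 4 * c + 1 := ⟨m / 4, by omega⟩
  refine ⟨X ^ 2 - X - C c, by monicity!, ?_⟩
  have hs' : s ^ 2 = 4 * c + 1 := by exact_mod_cast hs
  rw [eval₂_sub, eval₂_sub, eval₂_pow, eval₂_X, eval₂_C, eq_intCast]
  field_simp
  linear_combination hs'

theorem neg_le_four_mul_norm_one_add_sqrt_div_two_sq_add {k : Type*} [Field k] [CharZero k]
    [Algebra.IsQuadraticExtension ℚ k] {m : ℤ} (hm : Squarefree m) (hm0 : m < 0) {s : k}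
    (hs : s ^ 2 = m) {δ : k} (hδ : IsIntegral ℤ δ) :
    -(m : ℚ) ≤ 4 * Algebra.norm ℚ (((1 + s) / 2) ^ 2 + 2 * δ) := by
  have hm0' : (m : ℚ) < 0 := Int.cast_lt_zero.2 hm0
  have hm' : ¬ IsSquare (m : ℚ) := fun h ↦ h.nonneg.not_gt hm0'
  have hs' : s ^ 2 = algebraMap ℚ k m := by simpa using hs
  obtain ⟨x, y, rfl⟩ := exists_eq_add_mul_sqrt_s17 hm' hs' δ
  obtain ⟨b, hb⟩ := isInteger_two_mul_of_isIntegral_add_mul_sqrt (R := ℤ) hm hm' hs' hδ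
  have hcoord : ((1 + s) / 2) ^ 2 + 2 * (algebraMap ℚ k x + algebraMap ℚ k y * s) =
      algebraMap ℚ k ((1 + m) / 4 + 2 * x) + algebraMap ℚ k ((2 * b + 1) / 2) * s := by
    have hb' : (b : k) = 2 * algebraMap ℚ k y := by simpa using congr(algebraMap ℚ k $hb)
    simp only [map_add, map_mul, map_div₀, map_one, map_ofNat, map_intCast, hb']
    linear_combination hs / 4
  have hodd : (1 : ℚ) ≤ (2 * b + 1) ^ 2 := by
    have : 0 < (2 * b + 1) ^ 2 := sq_pos_of_ne_zero (by omega)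
    exact_mod_cast this
  rw [hcoord, norm_add_mul_sqrt_s17 hm' hs']
  nlinarith [sq_nonneg ((1 + (m : ℚ)) / 4 + 2 * x)]

namespace IsNormEuclidean

variable {K : Type*} [Field K] [NumberField K]

theorem exists_abs_norm_sub_mul_lt_s17 (hK : IsNormEuclidean K) (β : K) {d : K} (hd : d ≠ 0) :
    ∃ η : 𝓞 K, |Algebra.norm ℚ (β - d * η)| < |Algebra.norm ℚ d| := by
  obtain ⟨η, hη⟩ := hK (β / d)
  refine ⟨η, ?_⟩
  have : β - d * η = d * (β / d - η) := by field_simp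
  rw [this, map_mul, abs_mul]
  exact mul_lt_of_lt_one_right (abs_pos.2 (Algebra.norm_ne_zero_iff.2 hd)) hη

theorem exists_abs_norm_sq_add_mul_lt (hK : IsNormEuclidean K) {k : Type*} [Field k]
    [NumberField k] [Algebra k K] [Algebra.IsQuadraticExtension k K] (α : 𝓞 k) {d : 𝓞 k}
    (hd : d ≠ 0) :
    ∃ δ : 𝓞 k, |Algebra.norm ℚ ((α : k) ^ 2 + d * δ)| < Algebra.norm ℚ (d : k) ^ 2 := by
  have hdK : algebraMap k K d ≠ 0 := by simpa using hd
  obtain ⟨η, hη⟩ := hK.exists_abs_norm_sub_mul_lt_s17 (algebraMap k K α) hdK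
  let δ : 𝓞 k := d * Algebra.intNorm (𝓞 k) (𝓞 K) η - α * Algebra.intTrace (𝓞 k) (𝓞 K) η
  have hδ : (δ : k) = d * Algebra.norm k (η : K) - α * Algebra.trace k K (η : K) := by
    rw [← Algebra.algebraMap_intNorm (A := 𝓞 k), ← Algebra.algebraMap_intTrace (A := 𝓞 k)]
    simp [δ]
  have hnorm : Algebra.norm k (algebraMap k K α - algebraMap k K d * η) =
      (α : k) ^ 2 + d * δ := by
    rw [norm_algebraMap_sub_mul, hδ]
    ring
  refine ⟨δ, ?_⟩
  rw [← hnorm, Algebra.norm_norm]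
  refine hη.trans_eq ?_
  rw [← Algebra.norm_norm (S := k), Algebra.norm_algebraMap,
    Algebra.IsQuadraticExtension.finrank_eq_two, map_pow, abs_sq]

end IsNormEuclidean

theorem case_C_normEuclidean_bound_general {K : Type*} [Field K] [NumberField K] {m : ℤ}
    (hm : Squarefree m) (hm0 : m < 0) (hm4 : m % 4 = 1) {s : K} (hs : s ^ 2 = m)
    (h4 : Module.finrank ℚ K = 4) (hK : IsNormEuclidean K) : |m| < 64 := by
  have hm' : ¬ IsSquare (m : ℚ) := fun h ↦ h.nonneg.not_gt (Int.cast_lt_zero.2 hm0)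
  let k := IntermediateField.adjoin ℚ {s}
  have : Algebra.IsQuadraticExtension ℚ k :=
    isQuadraticExtension_adjoin_sqrt hm' (by simpa using hs)
  have : Algebra.IsQuadraticExtension k K := by
    refine ⟨?_⟩
    have h := Module.finrank_mul_finrank ℚ k K
    rw [Algebra.IsQuadraticExtension.finrank_eq_two ℚ k, h4] at h
    omega
  obtain ⟨t, ht⟩ : ∃ t : k, t ^ 2 = m :=
    ⟨IntermediateField.AdjoinSimple.gen ℚ s, by ext; simpa using hs⟩
  obtain ⟨δ, hδ⟩ := hK.exists_abs_norm_sq_add_mul_lt (k := k)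
    ⟨(1 + t) / 2, isIntegral_one_add_sqrt_div_two hm4 ht⟩ two_ne_zero
  have hnorm2 : Algebra.norm ℚ ((2 : 𝓞 k) : k) = 4 := by
    have h2 : ((2 : 𝓞 k) : k) = algebraMap ℚ k 2 := by rw [map_ofNat]; rfl
    rw [h2, Algebra.norm_algebraMap, Algebra.IsQuadraticExtension.finrank_eq_two]
    norm_num
  have hlower := neg_le_four_mul_norm_one_add_sqrt_div_two_sq_add hm hm0 ht δ.isIntegral_coe
  have hupper : Algebra.norm ℚ (((1 + t) / 2) ^ 2 + 2 * (δ : k)) < 16 := by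
    refine (le_abs_self _).trans_lt (hδ.trans_eq ?_)
    rw [hnorm2]
    norm_num
  rw [abs_of_neg hm0]
  exact_mod_cast (by linarith : -(m : ℚ) < 64)

/-- Case (C): if `K = ℚ(√m, √n)` with `m, n < 0` and 2 unramified in `K`
is norm-Euclidean, then `|m| < 64` and `|n| < 64`. -/
theorem case_C_normEuclidean_bound
    {K : Type*} [Field K] [NumberField K]
    (m n : ℤ) (hmsf : Squarefree m) (hnsf : Squarefree n) (hmn : m ≠ n)
    (hmneg : m < 0) (hnneg : n < 0)
    (sm sn : K) (hsm : sm ^ 2 = (m : K)) (hsn : sn ^ 2 = (n : K))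
    (h4 : Module.finrank ℚ K = 4)
    (hunram : ∀ P : Ideal (𝓞 K), P.IsPrime → ¬ P ^ 2 ∣ Ideal.span {(2 : 𝓞 K)})
    (hE : IsNormEuclidean K) :
    |m| < 64 ∧ |n| < 64 := by
  have bound {a : ℤ} (ha : Squarefree a) (ha0 : a < 0) {s : K} (hs : s ^ 2 = a) : |a| < 64 :=
    case_C_normEuclidean_bound_general ha ha0
      (emod_four_eq_one_of_unramified_two hunram ha hs) hs h4 hE
  exact ⟨bound hmsf hmneg hsm, bound hnsf hnneg hsn⟩
end

section
/- The ring of integers of K = ℚ(√−7, √−19) is not norm-Euclidean. -/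
open NumberField

/-!
Let `K/k` be Galois of degree `n`, and let `π ∈ 𝓞 K` divide all its conjugates over `k`. For
`c ∈ 𝓞 k`, every conjugate of `c - η π` is congruent to `c` modulo `π`, so the relative norm of
`c - η π` is congruent to `c ^ n`. If `K` is norm-Euclidean, division of `c` by `π` therefore yields
an element of `𝓞 k` that is congruent to `c ^ n` modulo `π` and has smaller norm than `π`.

For `k = ℚ(√-19)`, the prime `((3 + √-19) / 2)` of norm `7` is totally ramified in `K`; let `π`
generate the prime above it. For `c = 2` there is no such element of `𝓞 k`: those of norm below `7`
are `0`, `±1`, `±2` and `(±1 ± √-19) / 2`, and none of them is congruent to `4`.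
-/

theorem IsNormEuclidean.exists_abs_norm_sub_mul_lt_s18 {K : Type*} [Field K] [NumberField K]
    (hK : IsNormEuclidean K) (γ : 𝓞 K) {δ : 𝓞 K} (hδ : δ ≠ 0) :
    ∃ η : 𝓞 K, |Algebra.norm ℤ (γ - η * δ)| < |Algebra.norm ℤ δ| := by
  obtain ⟨η, hη⟩ := hK (γ / δ)
  have hδK : (δ : K) ≠ 0 := RingOfIntegers.coe_ne_zero_iff.mpr hδ
  have hpos : 0 < |Algebra.norm ℚ (δ : K)| := abs_pos.mpr (Algebra.norm_ne_zero_iff.mpr hδK)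
  have hfactor : ((γ - η * δ : 𝓞 K) : K) = (γ / δ - η) * δ := by
    push_cast
    field_simp
  refine ⟨η, ?_⟩
  rw [← Int.cast_lt (R := ℚ), Int.cast_abs, Int.cast_abs, Algebra.coe_norm_int,
    Algebra.coe_norm_int, hfactor, map_mul, abs_mul]
  exact mul_lt_of_lt_one_left hpos hη

section RelativeNorm

variable {k K : Type*} [Field k] [Field K] [Algebra k K]

section Galois

variable [FiniteDimensional k K] [IsGalois k K]

theorem algebraMap_relNorm_eq_prod_smul (α : 𝓞 K) :
    algebraMap (𝓞 k) (𝓞 K) (RingOfIntegers.norm k α) = ∏ σ : Gal(K/k), σ • α := by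
  ext
  rw [RingOfIntegers.coe_algebraMap_norm, Algebra.norm_eq_prod_automorphisms]
  simp [algebraMap.smul']

theorem dvd_relNorm_sub_mul_sub_pow {π : 𝓞 K} (hπ : ∀ σ : Gal(K/k), π ∣ σ • π)
    (c : 𝓞 k) (η : 𝓞 K) :
    π ∣ algebraMap (𝓞 k) (𝓞 K)
      (RingOfIntegers.norm k (algebraMap (𝓞 k) (𝓞 K) c - η * π) - c ^ Module.finrank k K) := by
  have hfix (σ : Gal(K/k)) : σ • algebraMap (𝓞 k) (𝓞 K) c = algebraMap (𝓞 k) (𝓞 K) c :=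
    RingOfIntegers.ext (σ.commutes c)
  let mod := Ideal.Quotient.mk (Ideal.span {π})
  have hconj (σ : Gal(K/k)) :
      mod (σ • (algebraMap (𝓞 k) (𝓞 K) c - η * π)) = mod (algebraMap (𝓞 k) (𝓞 K) c) := by
    rw [Ideal.Quotient.mk_eq_mk_iff_sub_mem, Ideal.mem_span_singleton, smul_sub, smul_mul',
      hfix, sub_sub_cancel_left, dvd_neg]
    exact (hπ σ).mul_left _
  rw [← Ideal.mem_span_singleton, map_sub, ← Ideal.Quotient.mk_eq_mk_iff_sub_mem]
  calc mod (algebraMap (𝓞 k) (𝓞 K) (RingOfIntegers.norm k _))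
    _ = ∏ σ : Gal(K/k), mod (σ • (algebraMap (𝓞 k) (𝓞 K) c - η * π)) := by
      rw [algebraMap_relNorm_eq_prod_smul, map_prod]
    _ = mod (algebraMap (𝓞 k) (𝓞 K) c) ^ Module.finrank k K := by
      rw [Finset.prod_congr rfl fun σ _ ↦ hconj σ, Finset.prod_const, Finset.card_univ,
        ← Nat.card_eq_fintype_card, IsGalois.card_aut_eq_finrank]
    _ = mod (algebraMap (𝓞 k) (𝓞 K) (c ^ Module.finrank k K)) := by rw [map_pow, map_pow]

end Galois

variable [NumberField k] [NumberField K]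

theorem norm_int_relNorm (α : 𝓞 K) :
    Algebra.norm ℤ (RingOfIntegers.norm k α) = Algebra.norm ℤ α := by
  rw [← Int.cast_inj (α := ℚ), Algebra.coe_norm_int, Algebra.coe_norm_int,
    RingOfIntegers.coe_norm, Algebra.norm_norm]

theorem norm_int_algebraMap_s18 (γ : 𝓞 k) :
    Algebra.norm ℤ (algebraMap (𝓞 k) (𝓞 K) γ) = Algebra.norm ℤ γ ^ Module.finrank k K := by
  rw [← norm_int_relNorm (k := k), RingOfIntegers.norm_algebraMap, map_pow]

theorem prime_dvd_norm_int_of_dvd_algebraMap {p : ℤ} (hp : Prime p) {π : 𝓞 K}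
    (hπ : p ∣ Algebra.norm ℤ π) {γ : 𝓞 k} (h : π ∣ algebraMap (𝓞 k) (𝓞 K) γ) :
    p ∣ Algebra.norm ℤ γ := by
  have hdvd := hπ.trans (map_dvd (Algebra.norm ℤ) h)
  rw [norm_int_algebraMap_s18] at hdvd
  exact hp.dvd_of_dvd_pow hdvd

theorem IsNormEuclidean.exists_relNorm_congr_pow [IsGalois k K] (hK : IsNormEuclidean K)
    {π : 𝓞 K} (hπ₀ : π ≠ 0) (hπ : ∀ σ : Gal(K/k), π ∣ σ • π) (c : 𝓞 k) :
    ∃ α : 𝓞 K, π ∣ algebraMap (𝓞 k) (𝓞 K) (RingOfIntegers.norm k α - c ^ Module.finrank k K) ∧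
      |Algebra.norm ℤ (RingOfIntegers.norm k α)| < |Algebra.norm ℤ π| := by
  obtain ⟨η, hη⟩ := hK.exists_abs_norm_sub_mul_lt_s18 (algebraMap (𝓞 k) (𝓞 K) c) hπ₀
  exact ⟨_, dvd_relNorm_sub_mul_sub_pow hπ c η, by rwa [norm_int_relNorm]⟩

end RelativeNorm

section QuadraticIntegers

open QuadraticAlgebra

theorem exists_int_eq_of_isIntegral_algebraMap {R : Type*} [CommRing R] [Nontrivial R]
    [Algebra ℚ R] {q : ℚ} (hq : IsIntegral ℤ (algebraMap ℚ R q)) : ∃ m : ℤ, q = m :=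
  (IsIntegrallyClosed.isIntegral_iff.mp
    ((isIntegral_algebraMap_iff (algebraMap ℚ R).injective).mp hq)).imp fun _ ↦ Eq.symm

theorem exists_int_eq_of_squarefree_mul_sq {d n : ℤ} (hd : Squarefree d) {q : ℚ}
    (h : d * q ^ 2 = n) : ∃ m : ℤ, q = m := by
  have hsq : (d * q) ^ 2 = (d * n : ℤ) := by
    push_cast
    linear_combination (d : ℚ) * h
  obtain ⟨e, he⟩ : ∃ e : ℤ, d * q = e := by
    refine exists_int_eq_of_isIntegral_algebraMap (R := ℚ) (.of_pow two_pos ?_)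
    rw [Algebra.algebraMap_self_apply, hsq]
    exact isIntegral_algebraMap
  obtain ⟨m, rfl⟩ : d ∣ e := by
    rw [he] at hsq
    exact (hd.dvd_pow_iff_dvd two_ne_zero).mp ⟨n, by exact_mod_cast hsq⟩
  have hd₀ : (d : ℚ) ≠ 0 := Int.cast_ne_zero.mpr hd.ne_zero
  exact ⟨m, mul_left_cancel₀ hd₀ (by rw [he, Int.cast_mul])⟩

variable {a b : ℤ}

theorem isIntegral_omega : IsIntegral ℤ (omega : QuadraticAlgebra ℚ a b) := by
  refine ⟨.X ^ 2 - (.C b * .X + .C a), by monicity!, ?_⟩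
  rw [← Polynomial.aeval_def, map_sub, map_add, map_mul, map_pow, Polynomial.aeval_X,
    Polynomial.aeval_C, Polynomial.aeval_C, sq, omega_mul_omega_eq_add, sub_eq_zero]
  simp [Algebra.smul_def, add_comm]

theorem exists_int_eq_mk_of_isIntegral (hd : Squarefree (b ^ 2 + 4 * a))
    {z : QuadraticAlgebra ℚ a b} (hz : IsIntegral ℤ z) : ∃ m n : ℤ, z = ⟨m, n⟩ := by
  have hstar : IsIntegral ℤ (star z) := hz.map (starRingEnd _).toIntAlgHom
  obtain ⟨t, ht⟩ : ∃ t : ℤ, trace z = t :=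
    exists_int_eq_of_isIntegral_algebraMap (algebraMap_trace_eq_add_star z ▸ hz.add hstar)
  obtain ⟨s, hs⟩ : ∃ s : ℤ, norm z = s :=
    exists_int_eq_of_isIntegral_algebraMap (algebraMap_norm_eq_mul_star z ▸ hz.mul hstar)
  obtain ⟨n, hn⟩ : ∃ n : ℤ, z.im = n := by
    have hdisc : (b ^ 2 + 4 * a : ℤ) * z.im ^ 2 = (t ^ 2 - 4 * s : ℤ) := by
      push_cast
      rw [← ht, ← hs, trace_def, norm_def]
      ring
    exact exists_int_eq_of_squarefree_mul_sq hd hdisc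
  obtain ⟨m, hm⟩ : ∃ m : ℤ, z.re = m := by
    have hre : algebraMap ℚ (QuadraticAlgebra ℚ (a : ℚ) b) z.re = z - n • omega := by
      ext <;> simp [hn]
    exact exists_int_eq_of_isIntegral_algebraMap (hre ▸ hz.sub (isIntegral_omega.smul n))
  exact ⟨m, n, by ext <;> assumption⟩

theorem exists_ringOfIntegers_sq_eq_sub {K : Type*} [Field K] [CharZero K] {x : K} {c : 𝓞 K}
    (hx : x ^ 2 = 1 - 4 * c) : ∃ θ : 𝓞 K, θ ^ 2 = θ - c := by
  have hroot : ((1 + x) / 2) ^ 2 = (1 + x) / 2 - c := by linear_combination hx / 4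
  have hint : IsIntegral (𝓞 K) ((1 + x) / 2) := by
    refine ⟨.X ^ 2 - (.X - .C c), by monicity!, ?_⟩
    simp [hroot]
  exact ⟨⟨_, isIntegral_trans (A := 𝓞 K) _ hint⟩, RingOfIntegers.ext hroot⟩

theorem smul_eq_or_eq_one_sub_of_sq_eq_sub {G R : Type*} [Group G] [CommRing R] [IsDomain R]
    [MulSemiringAction G R] {θ c : R} (hθ : θ ^ 2 = θ - c) {σ : G} (hσ : σ • c = c) :
    σ • θ = θ ∨ σ • θ = 1 - θ := by
  have hσθ : (σ • θ) ^ 2 = σ • θ - c := by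
    rw [← smul_pow', hθ, smul_sub, hσ]
  have hprod : (σ • θ - θ) * (σ • θ - (1 - θ)) = 0 := by linear_combination hσθ - hθ
  simpa only [mul_eq_zero, sub_eq_zero] using hprod

end QuadraticIntegers

/-- The field `ℚ(√-19)`, presented as `ℚ[ω]` with `ω ^ 2 = -5 + ω`, so that `ω = (1 + √-19) / 2` and
the algebraic integers are the elements with integer coordinates. -/
abbrev QSqrtNeg19 : Type := QuadraticAlgebra ℚ (-5) 1

namespace QSqrtNeg19

instance : Fact (∀ r : ℚ, r ^ 2 ≠ -5 + 1 * r) :=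
  ⟨fun r _ ↦ by nlinarith [sq_nonneg (2 * r - 1)]⟩

instance : NumberField QSqrtNeg19 where
  to_finiteDimensional := inferInstanceAs (Module.Finite ℚ (QuadraticAlgebra ℚ (-5) 1))

/-- The integer `ω = (1 + √-19) / 2`. -/
def ω : 𝓞 QSqrtNeg19 := ⟨QuadraticAlgebra.omega, isIntegral_omega (a := -5) (b := 1)⟩

theorem coe_ω : algebraMap _ QSqrtNeg19 ω = QuadraticAlgebra.omega :=
  rfl

theorem coe_int_add_mul_ω (m n : ℤ) : ((m + n * ω : 𝓞 QSqrtNeg19) : QSqrtNeg19) = ⟨m, n⟩ := by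
  rw [RingOfIntegers.coe_eq_algebraMap, map_add, map_mul, map_intCast, map_intCast, coe_ω]
  ext <;> simp

theorem ω_sq : ω ^ 2 = ω - 5 := by
  refine RingOfIntegers.ext ?_
  rw [RingOfIntegers.coe_eq_algebraMap, RingOfIntegers.coe_eq_algebraMap, map_pow, map_sub,
    map_ofNat, coe_ω, sq, QuadraticAlgebra.omega_mul_omega_eq_add]
  simp only [Algebra.smul_def, map_neg, map_ofNat, map_one]
  ring

theorem algebraMap_ω_sq {K : Type*} [Field K] [Algebra QSqrtNeg19 K] :
    algebraMap _ (𝓞 K) ω ^ 2 = algebraMap _ (𝓞 K) ω - 5 := by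
  rw [← map_pow, ω_sq, map_sub, map_ofNat]

theorem exists_int_eq_add_mul_ω (β : 𝓞 QSqrtNeg19) : ∃ m n : ℤ, β = m + n * ω := by
  have hdisc : Squarefree (1 ^ 2 + 4 * -5 : ℤ) := by
    norm_num [← Int.squarefree_natAbs, (by norm_num : Nat.Prime 19).squarefree]
  obtain ⟨m, n, hmn⟩ := exists_int_eq_mk_of_isIntegral hdisc β.isIntegral_coe
  exact ⟨m, n, RingOfIntegers.ext (hmn.trans (coe_int_add_mul_ω m n).symm)⟩

theorem norm_int_add_mul_ω (m n : ℤ) :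
    Algebra.norm ℤ (m + n * ω : 𝓞 QSqrtNeg19) = m ^ 2 + m * n + 5 * n ^ 2 := by
  rw [← Int.cast_inj (α := ℚ), Algebra.coe_norm_int, coe_int_add_mul_ω, Algebra.norm_apply]
  refine QuadraticAlgebra.det_toLinearMap_eq_norm _ |>.trans ?_
  rw [QuadraticAlgebra.norm_def]
  push_cast
  ring

theorem norm_one_add_ω : Algebra.norm ℤ (1 + ω) = 7 := by
  simpa using norm_int_add_mul_ω 1 1

theorem seven_le_abs_norm_of_dvd_norm_sub_two_sq {β : 𝓞 QSqrtNeg19}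
    (hβ : 7 ∣ Algebra.norm ℤ (β - 2 ^ 2)) : 7 ≤ |Algebra.norm ℤ β| := by
  obtain ⟨m, n, rfl⟩ := exists_int_eq_add_mul_ω β
  have hsub : (m + n * ω - 2 ^ 2 : 𝓞 QSqrtNeg19) = (m - 4 : ℤ) + n * ω := by
    push_cast
    ring
  rw [hsub, norm_int_add_mul_ω] at hβ
  rw [norm_int_add_mul_ω]
  by_contra! hlt
  replace hlt := (abs_lt.mp hlt).2
  have hn : n ^ 2 < 2 ^ 2 := by nlinarith [sq_nonneg (2 * m + n)]
  have hm : m ^ 2 < 3 ^ 2 := by nlinarith [sq_nonneg (m + 10 * n)]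
  obtain ⟨hn₁, hn₂⟩ := abs_lt.mp (abs_lt_of_sq_lt_sq hn (by norm_num))
  obtain ⟨hm₁, hm₂⟩ := abs_lt.mp (abs_lt_of_sq_lt_sq hm (by norm_num))
  interval_cases n <;> interval_cases m <;> omega

variable {K : Type*} [Field K] [CharZero K]

theorem nonempty_algebra {b : K} (hb : b ^ 2 = -19) : Nonempty (Algebra QSqrtNeg19 K) := by
  have hroot : (1 + b) / 2 * ((1 + b) / 2) = (-5 : ℚ) • 1 + (1 : ℚ) • ((1 + b) / 2) := by
    simp only [Algebra.smul_def, map_neg, map_ofNat, map_one]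
    linear_combination hb / 4
  exact ⟨(QuadraticAlgebra.lift ⟨_, hroot⟩).toRingHom.toAlgebra⟩

theorem two_mul_finrank [Algebra QSqrtNeg19 K] :
    2 * Module.finrank QSqrtNeg19 K = Module.finrank ℚ K := by
  rw [← Module.finrank_mul_finrank ℚ QSqrtNeg19 K]
  congr 1
  exact (QuadraticAlgebra.finrank_eq_two (-5 : ℚ) 1).symm

end QSqrtNeg19

section RamifiedPrime

variable {R : Type*} [CommRing R]

/-- A generator of the prime of `ℚ(√-7, √-19)` above `(3 + √-19) / 2 = 1 + w`, where
`w = (1 + √-19) / 2` and `θ = (1 + √-7) / 2`. -/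
def ramifiedGenerator (w θ : R) : R := 3 - w * θ

variable {w θ : R}

-- In terms of square roots, the unit is `(3√-19 - 5√-7) / 2`, with inverse `(3√-19 + 5√-7) / 2`.
theorem associated_ramifiedGenerator_conj (hw : w ^ 2 = w - 5) (hθ : θ ^ 2 = θ - 2) :
    Associated (ramifiedGenerator w θ) (ramifiedGenerator w (1 - θ)) := by
  have hunit : (1 - 5 * θ + 3 * w) * (1 - 5 * (1 - θ) + 3 * w) = 1 := by
    linear_combination 9 * hw - 25 * hθ
  refine ⟨.mkOfMulEqOne _ _ hunit, ?_⟩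
  rw [Units.val_mkOfMulEqOne, ramifiedGenerator, ramifiedGenerator]
  linear_combination -3 * θ * hw + 5 * w * hθ

theorem associated_ramifiedGenerator_sq (hw : w ^ 2 = w - 5) (hθ : θ ^ 2 = θ - 2) :
    Associated (ramifiedGenerator w θ ^ 2) (1 + w) := by
  have hmul : ramifiedGenerator w θ * ramifiedGenerator w (1 - θ) = -(1 + w) := by
    rw [ramifiedGenerator, ramifiedGenerator]
    linear_combination 2 * hw - w ^ 2 * hθ
  rw [sq, ← Associated.neg_right_iff, ← hmul]
  exact (associated_ramifiedGenerator_conj hw hθ).mul_left _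

theorem ramifiedGenerator_dvd_smul [IsDomain R] {G : Type*} [Group G] [MulSemiringAction G R]
    (hw : w ^ 2 = w - 5) (hθ : θ ^ 2 = θ - 2) {σ : G} (hσ : σ • w = w) :
    ramifiedGenerator w θ ∣ σ • ramifiedGenerator w θ := by
  have hnat (n : ℕ) [n.AtLeastTwo] : σ • (ofNat(n) : R) = ofNat(n) :=
    map_ofNat (MulSemiringAction.toRingHom G R σ) n
  have hsmul : σ • ramifiedGenerator w θ = ramifiedGenerator w (σ • θ) := by
    simp only [ramifiedGenerator, smul_sub, smul_mul', hσ, hnat]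
  rw [hsmul]
  obtain hfix | hconj := smul_eq_or_eq_one_sub_of_sq_eq_sub hθ (hnat 2)
  · rw [hfix]
  · rw [hconj]
    exact (associated_ramifiedGenerator_conj hw hθ).dvd

end RamifiedPrime

open QSqrtNeg19 in
theorem abs_norm_ramifiedGenerator {K : Type*} [Field K] [NumberField K] [Algebra QSqrtNeg19 K]
    [Algebra.IsQuadraticExtension QSqrtNeg19 K] {θ : 𝓞 K} (hθ : θ ^ 2 = θ - 2) :
    |Algebra.norm ℤ (ramifiedGenerator (algebraMap (𝓞 QSqrtNeg19) (𝓞 K) ω) θ)| = 7 := by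
  have hassoc := (associated_ramifiedGenerator_sq algebraMap_ω_sq hθ).map (Algebra.norm ℤ)
  rw [← map_one (algebraMap (𝓞 QSqrtNeg19) (𝓞 K)), ← map_add, norm_int_algebraMap_s18,
    norm_one_add_ω, Algebra.IsQuadraticExtension.finrank_eq_two, map_pow] at hassoc
  rw [← sq_eq_sq₀ (abs_nonneg _) (by norm_num), ← abs_pow]
  exact abs_eq_abs.mpr (Int.associated_iff.mp hassoc)

/-- The field `K = ℚ(√-7, √-19)` is not norm-Euclidean. -/
theorem sqrt_neg7_sqrt_neg19_not_normEuclidean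
    {K : Type*} [Field K] [NumberField K]
    (a b : K) (ha : a ^ 2 = -7) (hb : b ^ 2 = -19)
    (h4 : Module.finrank ℚ K = 4) :
    ¬ IsNormEuclidean K := by
  intro hK
  obtain ⟨_⟩ := QSqrtNeg19.nonempty_algebra hb
  have hdeg : Module.finrank QSqrtNeg19 K = 2 := by
    have := QSqrtNeg19.two_mul_finrank (K := K)
    omega
  have : Algebra.IsQuadraticExtension QSqrtNeg19 K := ⟨hdeg⟩
  obtain ⟨θ, hθ⟩ : ∃ θ : 𝓞 K, θ ^ 2 = θ - 2 :=
    exists_ringOfIntegers_sq_eq_sub (x := a) (by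
      linear_combination ha + 4 * map_ofNat (algebraMap (𝓞 K) K) 2)
  let π := ramifiedGenerator (algebraMap (𝓞 QSqrtNeg19) (𝓞 K) QSqrtNeg19.ω) θ
  have hπ_norm : |Algebra.norm ℤ π| = 7 := abs_norm_ramifiedGenerator hθ
  have hπ_ne : π ≠ 0 := fun h ↦ by simp [h] at hπ_norm
  have hπ_dvd (σ : Gal(K/QSqrtNeg19)) : π ∣ σ • π :=
    ramifiedGenerator_dvd_smul QSqrtNeg19.algebraMap_ω_sq hθ (RingOfIntegers.ext (σ.commutes _))
  obtain ⟨α, hα, hlt⟩ := hK.exists_relNorm_congr_pow hπ_ne hπ_dvd 2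
  rw [hdeg] at hα
  have hdvd : 7 ∣ Algebra.norm ℤ (RingOfIntegers.norm QSqrtNeg19 α - 2 ^ 2) :=
    prime_dvd_norm_int_of_dvd_algebraMap (by norm_num) ((dvd_abs _ _).mp hπ_norm.symm.dvd) hα
  exact (QSqrtNeg19.seven_le_abs_norm_of_dvd_norm_sub_two_sq hdvd).not_gt (hπ_norm ▸ hlt)
end
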